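/- If X is a Hausdorff continuum with covering dimension at least 2, then the hyperspace C(X) of subcontinua of X (with the Vietoris topology) is not a C-space. -/

import Mathlib

open Set TopologicalSpace FirstOrder

universe u v

/-- `U` is a cover of `X` by open sets. -/
def IsOpenCover {X : Type u} [TopologicalSpace X] (U : Set (Set X)) : Prop :=
  (∀ s ∈ U, IsOpen s) ∧ ⋃₀ U = Set.univ

/-- `V` refines `U`: every member of `V` is contained in some member of `U`. -/
def Refines {X : Type u} (V U : Set (Set X)) : Prop :=
  ∀ v ∈ V, ∃ u ∈ U, v ⊆ u

/-- `X` is a C-space (has property C): every sequence of open covers admits a sequence of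
families of pairwise disjoint open sets, the `i`-th refining the `i`-th cover, whose union
covers `X`. -/
def IsCSpace (X : Type u) [TopologicalSpace X] : Prop :=
  ∀ U : ℕ → Set (Set X), (∀ i, IsOpenCover (U i)) →
    ∃ V : ℕ → Set (Set X),
      (∀ i, (∀ s ∈ V i, IsOpen s) ∧ (V i).PairwiseDisjoint id ∧ Refines (V i) (U i)) ∧
      (⋃ i, ⋃₀ (V i)) = Set.univ

/-- `X` is an `m`-C-space: property C restricted to `m`-element open covers. -/
def IsMCSpace (m : ℕ) (X : Type u) [TopologicalSpace X] : Prop :=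
  ∀ U : ℕ → Fin m → Set X, (∀ i j, IsOpen (U i j)) → (∀ i, (⋃ j, U i j) = Set.univ) →
    ∃ V : ℕ → Set (Set X),
      (∀ i, (∀ s ∈ V i, IsOpen s) ∧ (V i).PairwiseDisjoint id ∧ ∀ v ∈ V i, ∃ j, v ⊆ U i j) ∧
      (⋃ i, ⋃₀ (V i)) = Set.univ

/-- Covering dimension at most `n`: every finite open cover has a finite open refinement
of order at most `n + 1`. -/
def CovDimLE (X : Type u) [TopologicalSpace X] (n : ℕ) : Prop :=
  ∀ U : Set (Set X), U.Finite → IsOpenCover U →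
    ∃ V : Set (Set X), V.Finite ∧ IsOpenCover V ∧ Refines V U ∧
      ∀ x : X, {v ∈ V | x ∈ v}.ncard ≤ n + 1

/-- The covering dimension, as an extended natural number (`⊤` if infinite dimensional). -/
noncomputable def covDim (X : Type u) [TopologicalSpace X] : ℕ∞ :=
  sInf ((fun n : ℕ => (n : ℕ∞)) '' {n : ℕ | CovDimLE X n})

/-- The hyperspace `C(X)` of subcontinua (nonempty closed connected subsets) of `X`. -/
def Subcontinua (X : Type u) [TopologicalSpace X] : Type u :=
  {A : Set X // IsClosed A ∧ IsConnected A}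

/-- The Vietoris topology on the hyperspace of subcontinua. -/
instance Subcontinua.instTopologicalSpace (X : Type u) [TopologicalSpace X] :
    TopologicalSpace (Subcontinua X) :=
  TopologicalSpace.generateFrom
    ({s | ∃ U : Set X, IsOpen U ∧ s = {A : Subcontinua X | A.1 ⊆ U}} ∪
     {s | ∃ U : Set X, IsOpen U ∧ s = {A : Subcontinua X | (A.1 ∩ U).Nonempty}})


/-!
Suppose that `C(X)` has property C, and let `U 0, U 1, U 2` be an open cover of `X` without a
shrinking whose members have no common point. Encode the cover by functions `f` and `g` on `X`, and
apply property C to covers of `C(X)` that record where a continuum meets `{f < 1 / 4}` or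
`{f > -1 / 4}` under disjoint bumps, or misses a value of `g`. By compactness, finitely many closed
families `K i 0, K i 1, K i 2` with `i < n` exhaust `C(X)`, and `K i 0` and `K i 1` are disjoint.

On `X × [0, 1] ^ n` let `Φ` be a small crooked perturbation of `f - ∑ i, ρ i * (2 * z i - 1)`, where
`ρ i` is the `i`-th bump. Two continua in the zero set of `Φ` that meet have almost comparable
projections to `X`; if both projections have the value `2` under a suitable Whitney-like weight,
then they almost coincide. So the continua of weight `2` from `K i 0` are separated from those from
`K i 1`, and a function `κ i` does this while also separating the `i`-th faces of the cube. Every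
continuum in `{Φ = 0}` joining `{g = 0}` to `{g = 1}` contains one of weight `2`, which lies over
some `K i j`, so it cannot lie in `⋂ i, {κ i = 1 / 2}`. Cutting between components yields `γ` with
the signs of `g - 1 / 2` on `{g = 0}` and `{g = 1}` such that `Φ`, `γ - 1 / 2` and the `κ i - 1 / 2`
have no common zero.

The signs of these functions define cochains whose cup product vanishes on small simplices, because
one of the functions has constant sign there. Integrating over the edges of the cube one after the
other shows that the obstruction class of `(Φ, γ - 1 / 2)`, relative to the complements of the
`U j`, vanishes on `X` times a vertex. The resulting map from `X` to the circle, pulled back along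
the complements of three arcs, is a shrinking of `U` whose members have no common point.
-/

/-! ### Covering dimension -/

section CoveringDimension

/-- The family `U` has an open shrinking that covers `X` but has no point common to all members. -/
def HasThinShrinking {ι X : Type*} [TopologicalSpace X] (U : ι → Set X) : Prop :=
  ∃ W : ι → Set X, (∀ j, IsOpen (W j)) ∧ (∀ j, W j ⊆ U j) ∧ ⋃ j, W j = univ ∧ ⋂ j, W j = ∅

variable {X ι κ : Type*} [TopologicalSpace X]

/-- Merging the members of `v` into one block for each element of `κ` turns a thin shrinking of the
blocks into a shrinking of `v`. -/
lemma exists_shrinking_iInter_embedding_eq_empty [Nonempty κ]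
    (h : ∀ U : κ → Set X, (∀ j, IsOpen (U j)) → ⋃ j, U j = univ → HasThinShrinking U)
    {v : ι → Set X} (hv : ∀ i, IsOpen (v i)) (hcover : ⋃ i, v i = univ) (s : κ ↪ ι) :
    ∃ v' : ι → Set X, (∀ i, IsOpen (v' i)) ∧ ⋃ i, v' i = univ ∧ (∀ i, v' i ⊆ v i) ∧
      ⋂ j, v' (s j) = ∅ := by
  let block : ι → κ := Function.invFun s
  have block_s (j : κ) : block (s j) = j := Function.leftInverse_invFun s.injective j
  let U (j : κ) : Set X := ⋃ (i) (_ : block i = j), v i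
  have U_cover : ⋃ j, U j = univ := by
    refine eq_univ_of_forall fun x ↦ ?_
    obtain ⟨i, hi⟩ := mem_iUnion.1 (hcover ▸ mem_univ x)
    exact mem_iUnion.2 ⟨block i, mem_iUnion₂.2 ⟨i, rfl, hi⟩⟩
  obtain ⟨W, isOpen_W, W_sub, W_cover, W_inter⟩ :=
    h U (fun j ↦ isOpen_iUnion fun i ↦ isOpen_iUnion fun _ ↦ hv i) U_cover
  refine ⟨fun i ↦ v i ∩ W (block i), fun i ↦ (hv i).inter (isOpen_W _), ?_,
    fun i ↦ inter_subset_left, ?_⟩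
  · refine eq_univ_of_forall fun x ↦ ?_
    obtain ⟨j, hj⟩ := mem_iUnion.1 (W_cover ▸ mem_univ x)
    obtain ⟨i, rfl, hi⟩ := mem_iUnion₂.1 (W_sub j hj)
    exact mem_iUnion.2 ⟨i, hi, hj⟩
  · refine subset_empty_iff.1 <| W_inter ▸ iInter_mono fun j ↦ ?_
    simp only [block_s, inter_subset_right]

lemma exists_shrinking_forall_embedding [Nonempty κ] [Finite κ] [Finite ι]
    (h : ∀ U : κ → Set X, (∀ j, IsOpen (U j)) → ⋃ j, U j = univ → HasThinShrinking U)
    {v : ι → Set X} (hv : ∀ i, IsOpen (v i)) (hcover : ⋃ i, v i = univ) :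
    ∃ v' : ι → Set X, (∀ i, IsOpen (v' i)) ∧ ⋃ i, v' i = univ ∧ (∀ i, v' i ⊆ v i) ∧
      ∀ s : κ ↪ ι, ⋂ j, v' (s j) = ∅ := by
  suffices ∀ T : Set (κ ↪ ι), T.Finite → ∃ v' : ι → Set X, (∀ i, IsOpen (v' i)) ∧
      ⋃ i, v' i = univ ∧ (∀ i, v' i ⊆ v i) ∧ ∀ s ∈ T, ⋂ j, v' (s j) = ∅ by
    simpa using this univ finite_univ
  intro T hT
  induction T, hT using Set.Finite.induction_on with
  | empty => exact ⟨v, hv, hcover, fun _ ↦ Subset.rfl, by simp⟩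
  | @insert s T _ _ ih =>
    obtain ⟨v', hv', hcover', hsub', hT⟩ := ih
    obtain ⟨v'', hv'', hcover'', hsub'', hs⟩ :=
      exists_shrinking_iInter_embedding_eq_empty h hv' hcover' s
    refine ⟨v'', hv'', hcover'', fun i ↦ (hsub'' i).trans (hsub' i), ?_⟩
    rintro t (rfl | ht)
    exacts [hs, subset_empty_iff.1 <| hT t ht ▸ iInter_mono fun j ↦ hsub'' (t j)]

lemma covDimLE_of_forall_hasThinShrinking {n : ℕ}
    (h : ∀ U : Fin (n + 2) → Set X, (∀ j, IsOpen (U j)) → ⋃ j, U j = univ → HasThinShrinking U) :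
    CovDimLE X n := by
  intro U U_fin ⟨U_open, U_cover⟩
  have : Finite U := U_fin
  obtain ⟨v, hv, v_cover, v_sub, v_inter⟩ := exists_shrinking_forall_embedding h
    (v := ((↑) : U → Set X)) (fun u ↦ U_open u u.2) (by rwa [← sUnion_eq_iUnion])
  refine ⟨range v, finite_range v, ⟨forall_mem_range.2 hv, by rwa [sUnion_range]⟩,
    forall_mem_range.2 fun u ↦ ⟨u, u.2, v_sub u⟩, fun x ↦ ?_⟩
  let S : Set U := {u | x ∈ v u}
  have card_S : S.ncard ≤ n + 1 := by
    by_contra! hS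
    have := Fintype.ofFinite S
    obtain ⟨s⟩ : Nonempty (Fin (n + 2) ↪ S) := Function.Embedding.nonempty_of_card_le <| by
      rwa [Fintype.card_fin, ← Nat.card_eq_fintype_card, Nat.card_coe_set_eq]
    have hx : x ∈ ⋂ j, v (s.trans (.subtype _) j) := mem_iInter.2 fun j ↦ (s j).2
    rwa [v_inter] at hx
  have members : {w ∈ range v | x ∈ w} = v '' S := by
    ext w
    constructor
    · rintro ⟨⟨u, rfl⟩, hu⟩
      exact ⟨u, hu, rfl⟩
    · rintro ⟨u, hu, rfl⟩
      exact ⟨⟨u, rfl⟩, hu⟩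
  exact members ▸ (ncard_image_le S.toFinite).trans card_S

theorem exists_not_hasThinShrinking_of_lt_covDim {n : ℕ} (h : n < covDim X) :
    ∃ U : Fin (n + 2) → Set X, (∀ j, IsOpen (U j)) ∧ ⋃ j, U j = univ ∧ ¬HasThinShrinking U := by
  by_contra! hU
  have hn : CovDimLE X n := covDimLE_of_forall_hasThinShrinking hU
  exact h.not_ge (sInf_le (mem_image_of_mem _ hn))

end CoveringDimension

/-! ### Cochains on lists -/

/-- Ordered cochains of all degrees at once: the values on lists with `k + 1` entries form the
component of degree `k`, and the empty list accounts for the augmentation. -/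
abbrev ListCochain (R Q : Type*) := List Q → R

namespace ListCochain

variable {R Q Q' : Type*}

/-- `χ` is constant on the entries of `l`. -/
def ConstOn (χ : Q → R) (l : List Q) : Prop :=
  ∀ p ∈ l, ∀ q ∈ l, χ p = χ q

lemma ConstOn.of_forall_eq {χ : Q → R} {l : List Q} {a : R} (h : ∀ q ∈ l, χ q = a) :
    ConstOn χ l :=
  fun p hp q hq ↦ (h p hp).trans (h q hq).symm

variable [CommRing R]

/-- The value of the coboundary at a list; as a function of the cochain it is linear. -/
def coboundaryAt : List Q → ListCochain R Q →ₗ[R] R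
  | [] => 0
  | q :: l => LinearMap.proj l - (coboundaryAt l).comp (LinearMap.funLeft R R (List.cons q))

/-- The simplicial coboundary `∑ i, (-1) ^ i • (omit the i-th entry)`, by recursion on the list. -/
def coboundary : ListCochain R Q →ₗ[R] ListCochain R Q :=
  LinearMap.pi coboundaryAt

@[simp]
lemma coboundary_nil (ω : ListCochain R Q) : coboundary ω [] = 0 := rfl

lemma coboundary_cons (ω : ListCochain R Q) (q : Q) (l : List Q) :
    coboundary ω (q :: l) = ω l - coboundary (fun m ↦ ω (q :: m)) l := rfl

/-- The value of the prism operator at a list; as a function of the cochain it is linear. -/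
def prismAt (φ ψ : Q → Q') : List Q → ListCochain R Q' →ₗ[R] R
  | [] => 0
  | q :: l => LinearMap.proj (φ q :: ψ q :: l.map ψ) -
      (prismAt φ ψ l).comp (LinearMap.funLeft R R (List.cons (φ q)))

/-- The prism operator, the chain homotopy between pulling back along `φ` and along `ψ`. -/
def prism (φ ψ : Q → Q') : ListCochain R Q' →ₗ[R] ListCochain R Q :=
  LinearMap.pi (prismAt φ ψ)

lemma prism_nil (φ ψ : Q → Q') (ω : ListCochain R Q') : prism φ ψ ω [] = 0 := rfl

lemma prism_cons (φ ψ : Q → Q') (ω : ListCochain R Q') (q : Q) (l : List Q) :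
    prism φ ψ ω (q :: l) =
      ω (φ q :: ψ q :: l.map ψ) - prism φ ψ (fun m ↦ ω (φ q :: m)) l := rfl

lemma coboundary_comp_map (ψ : Q → Q') (ω : ListCochain R Q') (l : List Q) :
    coboundary (fun m ↦ ω (m.map ψ)) l = coboundary ω (l.map ψ) := by
  induction l generalizing ω with
  | nil => rfl
  | cons q l ih => simp only [coboundary_cons, List.map_cons, ← ih]

theorem coboundary_prism (φ ψ : Q → Q') (ω : ListCochain R Q') (l : List Q) :
    coboundary (prism φ ψ ω) l =
      ω (l.map ψ) - ω (l.map φ) - prism φ ψ (coboundary ω) l := by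
  induction l generalizing ω with
  | nil => simp [prism_nil]
  | cons q l ih =>
    have boundary_of_prism : coboundary (prism φ ψ ω) (q :: l) = prism φ ψ ω l -
        (coboundary (fun m ↦ ω (φ q :: ψ q :: m)) (l.map ψ) -
          coboundary (prism φ ψ fun m ↦ ω (φ q :: m)) l) := by
      rw [coboundary_cons, ← coboundary_comp_map,
        ← Pi.sub_apply (coboundary _) (coboundary _), ← map_sub]
      rfl
    have prism_of_boundary : prism φ ψ (coboundary ω) (q :: l) =
        ω (ψ q :: l.map ψ) - (ω (φ q :: l.map ψ) -
          coboundary (fun m ↦ ω (φ q :: ψ q :: m)) (l.map ψ)) -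
        (prism φ ψ ω l - prism φ ψ (coboundary fun m ↦ ω (φ q :: m)) l) := by
      rw [prism_cons, ← Pi.sub_apply (prism φ ψ ω), ← map_sub]
      rfl
    rw [boundary_of_prism, prism_of_boundary, ih, List.map_cons, List.map_cons]
    ring

/-- The lists that occur, as faces of the prism over `l`, in the value of the prism operator
at `l`. -/
structure InPrism (φ ψ : Q → Q') (l : List Q) (l' : List Q') : Prop where
  mem_image : ∀ q' ∈ l', ∃ q ∈ l, q' = φ q ∨ q' = ψ q
  image_mem : ∀ q ∈ l, φ q ∈ l' ∨ ψ q ∈ l'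

lemma InPrism.cons_cons (φ ψ : Q → Q') (q : Q) (l : List Q) :
    InPrism φ ψ (q :: l) (φ q :: ψ q :: l.map ψ) where
  mem_image := by
    simp only [List.mem_cons, List.mem_map]
    rintro q' (rfl | rfl | ⟨p, hp, rfl⟩)
    exacts [⟨q, .inl rfl, .inl rfl⟩, ⟨q, .inl rfl, .inr rfl⟩, ⟨p, .inr hp, .inr rfl⟩]
  image_mem p hp := by
    rcases List.mem_cons.1 hp with rfl | hp
    · exact .inl List.mem_cons_self
    · exact .inr (by simp [List.mem_map_of_mem hp])

lemma InPrism.cons {φ ψ : Q → Q'} {l : List Q} {l' : List Q'} (h : InPrism φ ψ l l') (q : Q) :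
    InPrism φ ψ (q :: l) (φ q :: l') where
  mem_image q' hq' := by
    rcases List.mem_cons.1 hq' with rfl | hq'
    · exact ⟨q, List.mem_cons_self, .inl rfl⟩
    · obtain ⟨p, hp, h'⟩ := h.mem_image q' hq'
      exact ⟨p, List.mem_cons_of_mem _ hp, h'⟩
  image_mem p hp := by
    rcases List.mem_cons.1 hp with rfl | hp
    · exact .inl List.mem_cons_self
    · exact (h.image_mem p hp).imp (List.mem_cons_of_mem _) (List.mem_cons_of_mem _)

lemma prism_eq_zero {φ ψ : Q → Q'} {ω : ListCochain R Q'} {l : List Q}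
    (h : ∀ l', InPrism φ ψ l l' → ω l' = 0) : prism φ ψ ω l = 0 := by
  induction l generalizing ω with
  | nil => rfl
  | cons q l ih =>
    rw [prism_cons, h _ (.cons_cons φ ψ q l), ih fun l' hl' ↦ h _ (hl'.cons q), sub_zero]

theorem coboundary_sum_prism {φ : ℕ → Q → Q'} {ω : ListCochain R Q'} {l : List Q} {N : ℕ}
    (h : ∀ r l', InPrism (φ r) (φ (r + 1)) l l' → coboundary ω l' = 0) :
    coboundary (∑ r ∈ Finset.range N, prism (φ r) (φ (r + 1)) ω) l =
      ω (l.map (φ N)) - ω (l.map (φ 0)) := by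
  rw [map_sum, Finset.sum_apply, ← Finset.sum_range_sub fun r ↦ ω (l.map (φ r))]
  refine Finset.sum_congr rfl fun r _ ↦ ?_
  rw [coboundary_prism, prism_eq_zero (h r), sub_zero]

/-- A function, regarded as a cochain of degree `0`. -/
def ofFun (χ : Q → R) : ListCochain R Q
  | [q] => χ q
  | _ => 0

/-- The cup product `δχ ∪ ω` with the coboundary of a function. -/
def dcup (χ : Q → R) : ListCochain R Q →ₗ[R] ListCochain R Q where
  toFun ω
    | q₀ :: q₁ :: l => (χ q₁ - χ q₀) * ω (q₁ :: l)
    | _ => 0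
  map_add' ω ω' := by ext (_ | ⟨_, _ | _⟩) <;> simp [mul_add]
  map_smul' c ω := by ext (_ | ⟨_, _ | _⟩) <;> simp [mul_left_comm]

lemma dcup_cons_cons (χ : Q → R) (ω : ListCochain R Q) (q₀ q₁ : Q) (l : List Q) :
    dcup χ ω (q₀ :: q₁ :: l) = (χ q₁ - χ q₀) * ω (q₁ :: l) := rfl

@[simp]
lemma dcup_nil (χ : Q → R) (ω : ListCochain R Q) : dcup χ ω [] = 0 := rfl

@[simp]
lemma dcup_singleton (χ : Q → R) (ω : ListCochain R Q) (q : Q) : dcup χ ω [q] = 0 := rfl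

lemma dcup_eq_zero {χ : Q → R} {l : List Q} (hχ : ConstOn χ l) (ω : ListCochain R Q) :
    dcup χ ω l = 0 := by
  match l with
  | [] | [_] => rfl
  | q₀ :: q₁ :: l => rw [dcup_cons_cons, hχ q₁ (by simp) q₀ (by simp), sub_self, zero_mul]

lemma dcup_congr (χ : Q → R) {ω ω' : ListCochain R Q} {l : List Q}
    (h : ∀ l' ⊆ l, ω l' = ω' l') : dcup χ ω l = dcup χ ω' l := by
  match l with
  | [] | [_] => rfl
  | q₀ :: q₁ :: l => rw [dcup_cons_cons, dcup_cons_cons, h _ (List.subset_cons_self _ _)]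

lemma coboundary_dcup (χ : Q → R) {ω : ListCochain R Q} (hω : ω [] = 0) :
    coboundary (dcup χ ω) = -dcup χ (coboundary ω) := by
  ext l
  match l with
  | [] => simp
  | [_] => simp [coboundary_cons]
  | q₀ :: q₁ :: l =>
    have pull_out : coboundary (fun m ↦ dcup χ ω (q₀ :: q₁ :: m)) l =
        (χ q₁ - χ q₀) * coboundary (fun m ↦ ω (q₁ :: m)) l := by
      rw [← smul_eq_mul, ← Pi.smul_apply, ← map_smul]
      rfl
    rw [Pi.neg_apply, coboundary_cons, coboundary_cons, pull_out, dcup_cons_cons, coboundary_cons]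
    cases l with
    | nil => simp [hω]
    | cons q₂ l => rw [dcup_cons_cons, dcup_cons_cons]; ring

lemma coboundary_ofFun (χ : Q → R) : coboundary (ofFun χ) = dcup χ (ofFun 1) := by
  ext l
  match l with
  | [] => rfl
  | [_] => simp [coboundary_cons, ofFun]
  | [_, _] => simp [coboundary_cons, dcup_cons_cons, ofFun]
  | q₀ :: q₁ :: q₂ :: l =>
    have vanish : (fun m ↦ ofFun χ (q₀ :: q₁ :: q₂ :: m)) = 0 := rfl
    simp only [coboundary_cons, vanish, map_zero, dcup_cons_cons]
    simp [ofFun]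

lemma ofFun_congr {χ χ' : Q → R} {l : List Q} (h : ∀ q ∈ l, χ q = χ' q) :
    ofFun χ l = ofFun χ' l := by
  match l with
  | [q] => exact h q (by simp)
  | [] | _ :: _ :: _ => rfl

/-- The iterated cup product `δχ₁ ∪ ⋯ ∪ δχₖ ∪ ω` for `L = [χ₁, …, χₖ]`. -/
def cupProd (L : List (Q → R)) : Module.End R (ListCochain R Q) :=
  (L.map dcup).prod

lemma cupProd_cons (χ : Q → R) (L : List (Q → R)) (ω : ListCochain R Q) :
    cupProd (χ :: L) ω = dcup χ (cupProd L ω) := by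
  simp [cupProd]

lemma cupProd_append_singleton (L : List (Q → R)) (χ : Q → R) (ω : ListCochain R Q) :
    cupProd (L ++ [χ]) ω = cupProd L (dcup χ ω) := by
  simp [cupProd]

lemma cupProd_congr (L : List (Q → R)) {ω ω' : ListCochain R Q} {l : List Q}
    (h : ∀ l' ⊆ l, ω l' = ω' l') : cupProd L ω l = cupProd L ω' l := by
  induction L generalizing l with
  | nil => exact h l (List.Subset.refl l)
  | cons χ L ih =>
    rw [cupProd_cons, cupProd_cons]
    exact dcup_congr χ fun l' hl' ↦ ih fun l'' hl'' ↦ h l'' (List.Subset.trans hl'' hl')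

lemma cupProd_eq_zero {L : List (Q → R)} {χ : Q → R} (hχL : χ ∈ L) {l : List Q}
    (hχ : ConstOn χ l) (ω : ListCochain R Q) : cupProd L ω l = 0 := by
  induction L generalizing l with
  | nil => simp at hχL
  | cons ψ L ih =>
    rw [cupProd_cons]
    rcases List.mem_cons.1 hχL with rfl | hχL
    · exact dcup_eq_zero hχ _
    · rw [dcup_congr ψ (ω' := 0) fun l' hl' ↦ ih hχL fun p hp q hq ↦ hχ p (hl' hp) q (hl' hq),
        map_zero, Pi.zero_apply]

lemma cupProd_nil_right (L : List (Q → R)) {ω : ListCochain R Q} (hω : ω [] = 0) :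
    cupProd L ω [] = 0 := by
  cases L with
  | nil => exact hω
  | cons χ L => rw [cupProd_cons, dcup_nil]

lemma coboundary_cupProd (L : List (Q → R)) {ω : ListCochain R Q} (hω : ω [] = 0) :
    coboundary (cupProd L ω) = (-1 : R) ^ L.length • cupProd L (coboundary ω) := by
  induction L with
  | nil => simp [cupProd]
  | cons χ L ih =>
    rw [cupProd_cons, coboundary_dcup χ (cupProd_nil_right L hω), ih, map_smul, cupProd_cons,
      List.length_cons, pow_succ, mul_neg_one, neg_smul]

end ListCochain

/-! ### Sign cochains over a cube -/

/-- The parameter cube. -/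
abbrev UnitCube (n : ℕ) := Fin n → unitInterval

namespace UnitCube

open ListCochain

variable {X R : Type*} {n : ℕ}

/-- Replaces the `k`-th cube coordinate of a point of `X × UnitCube n`. -/
def setCoord (k : Fin n) (s : unitInterval) (z : X × UnitCube n) : X × UnitCube n :=
  (z.1, Function.update z.2 k s)

lemma setCoord_eq_self {k : Fin n} {s : unitInterval} {z : X × UnitCube n} (h : z.2 k = s) :
    setCoord k s z = z := by
  rw [setCoord, ← h, Function.update_eq_self]

lemma setCoord_snd_self (k : Fin n) (s : unitInterval) (z : X × UnitCube n) :
    (setCoord k s z).2 k = s :=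
  Function.update_self ..

lemma setCoord_snd_of_ne {j k : Fin n} (h : j ≠ k) (s : unitInterval) (z : X × UnitCube n) :
    (setCoord k s z).2 j = z.2 j :=
  Function.update_of_ne h ..

/-- The entries of `l` are pairwise `V`-close in `X` and `ε`-close in the cube. -/
def IsSmall (V : Set (X × X)) (ε : ℝ) (l : List (X × UnitCube n)) : Prop :=
  ∀ p ∈ l, ∀ q ∈ l, (p.1, q.1) ∈ V ∧ dist p.2 q.2 ≤ ε

/-- A small list in the face of the cube where all coordinates from the `k`-th on equal `1`. -/
structure IsSmallOnFace (V : Set (X × X)) (ε : ℝ) (k : ℕ) (l : List (X × UnitCube n)) : Prop where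
  isSmall : IsSmall V ε l
  snd_eq_one : ∀ q ∈ l, ∀ j : Fin n, k ≤ j → q.2 j = 1

variable {V : Set (X × X)} {ε : ℝ} {bad : Set X}

lemma dist_update_le {z w : UnitCube n} {s t : unitInterval} (h : dist z w ≤ ε) (hst : dist s t ≤ ε)
    (k : Fin n) : dist (Function.update z k s) (Function.update w k t) ≤ ε := by
  refine (dist_pi_le_iff (dist_nonneg.trans h)).2 fun j ↦ ?_
  rcases eq_or_ne j k with rfl | hj
  · simpa using hst
  · simpa [hj] using (dist_le_pi_dist z w j).trans h

lemma IsSmallOnFace.of_inPrism {k : Fin n} {l l' : List (X × UnitCube n)}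
    (hl : IsSmallOnFace V ε k l) {s t : unitInterval} (hst : dist s t ≤ ε)
    (h : InPrism (setCoord k s) (setCoord k t) l l') : IsSmallOnFace V ε (k + 1) l' where
  isSmall p' hp' q' hq' := by
    have hself (r : unitInterval) : dist r r ≤ ε := by simpa using dist_nonneg.trans hst
    obtain ⟨p, hp, hpp'⟩ := h.mem_image p' hp'
    obtain ⟨q, hq, hqq'⟩ := h.mem_image q' hq'
    obtain ⟨hV, hε⟩ := hl.isSmall p hp q hq
    rcases hpp' with rfl | rfl <;> rcases hqq' with rfl | rfl
    exacts [⟨hV, dist_update_le hε (hself s) k⟩, ⟨hV, dist_update_le hε hst k⟩,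
      ⟨hV, dist_update_le hε (dist_comm s t ▸ hst) k⟩, ⟨hV, dist_update_le hε (hself t) k⟩]
  snd_eq_one q' hq' j hj := by
    obtain ⟨q, hq, hqq'⟩ := h.mem_image q' hq'
    have hjk : j ≠ k := by rintro rfl; omega
    rcases hqq' with rfl | rfl <;> rw [setCoord_snd_of_ne hjk] <;>
      exact hl.snd_eq_one q hq j (by omega)

lemma exists_sampling (hε : 0 < ε) :
    ∃ (N : ℕ) (s : ℕ → unitInterval), s 0 = 0 ∧ s N = 1 ∧ ∀ r, dist (s r) (s (r + 1)) ≤ ε := by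
  obtain ⟨N, hN⟩ := exists_nat_one_div_lt hε
  refine ⟨N + 1, fun r ↦ projIcc 0 1 zero_le_one (r / (N + 1 : ℝ)), ?_, ?_, fun r ↦ ?_⟩
  · exact projIcc_of_le_left _ (by simp)
  · exact projIcc_of_right_le _ (by push_cast; rw [div_self (by positivity)])
  · calc _ ≤ |(r : ℝ) / (N + 1) - ((r + 1 : ℕ) : ℝ) / (N + 1)| :=
          abs_projIcc_sub_projIcc zero_le_one
      _ = 1 / (N + 1) := by
          rw [← sub_div, abs_div, abs_of_pos (by positivity : (0 : ℝ) < N + 1)]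
          simp
      _ ≤ ε := hN.le

variable {L : List (X × UnitCube n → R)} {χ : Fin n → X × UnitCube n → R}

/-- The functions `L` together with the first `k` of the functions `χ`. -/
def factors (L : List (X × UnitCube n → R)) (χ : Fin n → X × UnitCube n → R) (k : ℕ) :
    List (X × UnitCube n → R) :=
  L ++ (List.ofFn χ).take k

lemma factors_succ (k : Fin n) : factors L χ (k + 1) = factors L χ k ++ [χ k] := by
  simp [factors, List.take_add_one]

lemma mem_factors {j : Fin n} {k : ℕ} (hj : j < k) : χ j ∈ factors L χ k :=
  List.mem_append_right _ <| List.mem_take_iff_getElem.2 ⟨j, by simp [hj], by simp⟩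

variable [CommRing R]

/-- Functions on `X × UnitCube n` that behave on small lists like the signs of continuous functions
without common zero: the `χ j` separate opposite faces of the cube, and over `bad` the functions
in `L` already have no common zero. -/
structure SignSystem (V : Set (X × X)) (ε : ℝ) (bad : Set X) (L : List (X × UnitCube n → R))
    (χ : Fin n → X × UnitCube n → R) : Prop where
  exists_constOn : ∀ l, IsSmall V ε l → ∃ ψ ∈ L ++ List.ofFn χ, ConstOn ψ l
  exists_constOn_of_bad : ∀ l, IsSmall V ε l → ∀ q ∈ l, q.1 ∈ bad → ∃ ψ ∈ L, ConstOn ψ l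
  eq_zero : ∀ l, IsSmall V ε l → ∀ j, ∀ q ∈ l, q.2 j = 0 → ∀ p ∈ l, χ j p = 0
  eq_one : ∀ l, IsSmall V ε l → ∀ j, ∀ q ∈ l, q.2 j = 1 → ∀ p ∈ l, χ j p = 1

/-- A primitive `b` of the cup product of the first factors on a face of the cube, vanishing over
`bad` and on the boundary of that face. -/
structure IsFacePrimitive (V : Set (X × X)) (ε : ℝ) (bad : Set X) (L : List (X × UnitCube n → R))
    (χ : Fin n → X × UnitCube n → R) (k : ℕ) (b : ListCochain R (X × UnitCube n)) : Prop where
  coboundary_eq : ∀ l, IsSmallOnFace V ε k l →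
    coboundary b l = cupProd (factors L χ k) (ofFun 1) l
  eq_zero_of_bad : ∀ l, IsSmallOnFace V ε k l → ∀ q ∈ l, q.1 ∈ bad → b l = 0
  eq_zero_of_side : ∀ l, IsSmallOnFace V ε k l → ∀ q ∈ l, ∀ j : Fin n, j < k →
    q.2 j = 0 ∨ q.2 j = 1 → b l = 0

/-- The difference of two primitives of the cup product of the first `k + 1` factors: the cup
product of the first `k` of them with `χ k`, and `b`. It is a cocycle, so its fibre integral
along the `k`-th edge has the difference of its values on the two ends as coboundary. -/
def differenceCocycle (L : List (X × UnitCube n → R)) (χ : Fin n → X × UnitCube n → R) (k : Fin n)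
    (b : ListCochain R (X × UnitCube n)) : ListCochain R (X × UnitCube n) :=
  cupProd (factors L χ k) (ofFun (χ k)) - (-1 : R) ^ (factors L χ k).length • b

section Step

variable {k : Fin n} {b : ListCochain R (X × UnitCube n)} {l : List (X × UnitCube n)}

lemma IsFacePrimitive.coboundary_differenceCocycle
    (hb : IsFacePrimitive V ε bad L χ (k + 1) b) (hl : IsSmallOnFace V ε (k + 1) l) :
    coboundary (differenceCocycle L χ k b) l = 0 := by
  rw [differenceCocycle, map_sub, map_smul, coboundary_cupProd _ rfl, coboundary_ofFun,
    ← cupProd_append_singleton, ← factors_succ, Pi.sub_apply, Pi.smul_apply, Pi.smul_apply,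
    hb.coboundary_eq l hl, sub_self]

lemma IsFacePrimitive.differenceCocycle_eq
    (hb : IsFacePrimitive V ε bad L χ (k + 1) b) (hl : IsSmallOnFace V ε (k + 1) l)
    {q : X × UnitCube n} (hq : q ∈ l) {j : Fin n} (hj : j ≤ k) (hqj : q.2 j = 0 ∨ q.2 j = 1) :
    differenceCocycle L χ k b l = cupProd (factors L χ k) (ofFun (χ k)) l := by
  rw [differenceCocycle, Pi.sub_apply, Pi.smul_apply,
    hb.eq_zero_of_side l hl q hq j (by omega) hqj, smul_zero, sub_zero]

lemma SignSystem.differenceCocycle_eq_zero_of_bad (S : SignSystem V ε bad L χ)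
    (hb : IsFacePrimitive V ε bad L χ (k + 1) b) (hl : IsSmallOnFace V ε (k + 1) l)
    {q : X × UnitCube n} (hq : q ∈ l) (hqb : q.1 ∈ bad) : differenceCocycle L χ k b l = 0 := by
  obtain ⟨ψ, hψ, hconst⟩ := S.exists_constOn_of_bad l hl.isSmall q hq hqb
  rw [differenceCocycle, Pi.sub_apply, Pi.smul_apply, hb.eq_zero_of_bad l hl q hq hqb,
    cupProd_eq_zero (L := factors L χ k) (List.mem_append_left _ hψ) hconst, smul_zero, sub_zero]

lemma SignSystem.differenceCocycle_eq_zero_of_side (S : SignSystem V ε bad L χ)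
    (hb : IsFacePrimitive V ε bad L χ (k + 1) b) (hl : IsSmallOnFace V ε (k + 1) l)
    {q : X × UnitCube n} (hq : q ∈ l) {j : Fin n} (hj : j < k) (hqj : q.2 j = 0 ∨ q.2 j = 1) :
    differenceCocycle L χ k b l = 0 := by
  have hconst : ConstOn (χ j) l := by
    intro p hp p' hp'
    rcases hqj with h | h
    · rw [S.eq_zero l hl.isSmall j q hq h p hp, S.eq_zero l hl.isSmall j q hq h p' hp']
    · rw [S.eq_one l hl.isSmall j q hq h p hp, S.eq_one l hl.isSmall j q hq h p' hp']
  rw [hb.differenceCocycle_eq hl hq hj.le hqj, cupProd_eq_zero (mem_factors hj) hconst]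

lemma SignSystem.differenceCocycle_eq_zero_of_bottom (S : SignSystem V ε bad L χ)
    (hb : IsFacePrimitive V ε bad L χ (k + 1) b) (hl : IsSmallOnFace V ε (k + 1) l)
    {q : X × UnitCube n} (hq : q ∈ l) (hqk : q.2 k = 0) : differenceCocycle L χ k b l = 0 := by
  rw [hb.differenceCocycle_eq hl hq le_rfl (.inl hqk), cupProd_congr _ (ω' := 0), map_zero,
    Pi.zero_apply]
  intro l' hl'
  rw [ofFun_congr (χ' := 0) fun p hp ↦ S.eq_zero l hl.isSmall k q hq hqk p (hl' hp)]
  match l' with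
  | [] | [_] | _ :: _ :: _ => rfl

lemma SignSystem.differenceCocycle_of_top (S : SignSystem V ε bad L χ)
    (hb : IsFacePrimitive V ε bad L χ (k + 1) b) (hl : IsSmallOnFace V ε (k + 1) l)
    {q : X × UnitCube n} (hq : q ∈ l) (hqk : q.2 k = 1) :
    differenceCocycle L χ k b l = cupProd (factors L χ k) (ofFun 1) l := by
  rw [hb.differenceCocycle_eq hl hq le_rfl (.inr hqk)]
  exact cupProd_congr _ fun l' hl' ↦
    ofFun_congr fun p hp ↦ S.eq_one l hl.isSmall k q hq hqk p (hl' hp)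

lemma SignSystem.coboundary_sum_prism_differenceCocycle (S : SignSystem V ε bad L χ)
    (hb : IsFacePrimitive V ε bad L χ (k + 1) b) {N : ℕ} {s : ℕ → unitInterval} (s_zero : s 0 = 0)
    (s_last : s N = 1) (hs : ∀ r, dist (s r) (s (r + 1)) ≤ ε) (hl : IsSmallOnFace V ε k l) :
    coboundary (∑ r ∈ Finset.range N,
        prism (setCoord k (s r)) (setCoord k (s (r + 1))) (differenceCocycle L χ k b)) l =
      cupProd (factors L χ k) (ofFun 1) l := by
  rw [coboundary_sum_prism (φ := fun r ↦ setCoord k (s r)) fun r l' hl' ↦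
    hb.coboundary_differenceCocycle (hl.of_inPrism (hs r) hl'), s_zero, s_last]
  rcases l.eq_nil_or_concat' with rfl | ⟨l₀, q, hlq⟩
  · rw [cupProd_nil_right _ rfl, List.map_nil, List.map_nil, sub_self]
  have hq : q ∈ l := by simp [hlq]
  have hface (p) (hp : p ∈ l) : p.2 k = 1 := hl.snd_eq_one p hp k le_rfl
  have map_top : l.map (setCoord k 1) = l :=
    (List.map_congr_left fun p hp ↦ setCoord_eq_self (hface p hp)).trans l.map_id
  have small_bottom : IsSmallOnFace V ε (k + 1) (l.map (setCoord k 0)) := by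
    refine hl.of_inPrism (s := 0) (t := 0) (by simpa using dist_nonneg.trans (hs 0)) ⟨?_, ?_⟩
    · exact List.forall_mem_map.2 fun p hp ↦ ⟨p, hp, .inl rfl⟩
    · exact fun p hp ↦ .inl (List.mem_map_of_mem hp)
  have small_top : IsSmallOnFace V ε (k + 1) l :=
    ⟨hl.isSmall, fun p hp j hj ↦ hl.snd_eq_one p hp j (by omega)⟩
  rw [map_top, S.differenceCocycle_of_top hb small_top hq (hface q hq),
    S.differenceCocycle_eq_zero_of_bottom hb small_bottom (List.mem_map_of_mem hq)
      (setCoord_snd_self k 0 q), sub_zero]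

theorem SignSystem.exists_isFacePrimitive_pred (S : SignSystem V ε bad L χ) (hε : 0 < ε)
    (hb : IsFacePrimitive V ε bad L χ (k + 1) b) :
    ∃ b', IsFacePrimitive V ε bad L χ k b' := by
  obtain ⟨N, s, s_zero, s_last, hs⟩ := exists_sampling hε
  refine ⟨∑ r ∈ Finset.range N,
    prism (setCoord k (s r)) (setCoord k (s (r + 1))) (differenceCocycle L χ k b),
    fun l ↦ S.coboundary_sum_prism_differenceCocycle hb s_zero s_last hs,
    fun l hl q hq hqb ↦ ?_, fun l hl q hq j hj hqj ↦ ?_⟩ <;>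
  refine (Finset.sum_apply ..).trans <|
    Finset.sum_eq_zero fun r _ ↦ prism_eq_zero fun l' hl' ↦ ?_
  · have small := hl.of_inPrism (hs r) hl'
    rcases hl'.image_mem q hq with h | h <;>
      exact S.differenceCocycle_eq_zero_of_bad hb small h hqb
  · have small := hl.of_inPrism (hs r) hl'
    have hjk : j ≠ k := Fin.ne_of_lt hj
    rcases hl'.image_mem q hq with h | h <;>
      exact S.differenceCocycle_eq_zero_of_side hb small h hj (by rwa [setCoord_snd_of_ne hjk])

end Step

theorem SignSystem.exists_primitive (S : SignSystem V ε bad L χ) (hε : 0 < ε) :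
    ∃ b : ListCochain R (X × UnitCube n), ∀ l, IsSmall V ε l → (∀ q ∈ l, q.2 = 1) →
      coboundary b l = cupProd L (ofFun 1) l ∧ ∀ q ∈ l, q.1 ∈ bad → b l = 0 := by
  have all_faces (k : ℕ) (hk : k ≤ n) : ∃ b, IsFacePrimitive V ε bad L χ k b := by
    induction hk using Nat.decreasingInduction with
    | self =>
      refine ⟨0, fun l hl ↦ ?_, fun _ _ _ _ _ ↦ rfl, fun _ _ _ _ _ _ _ ↦ rfl⟩
      obtain ⟨ψ, hψ, hconst⟩ := S.exists_constOn l hl.isSmall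
      rw [cupProd_eq_zero (by rwa [factors, List.take_of_length_le (by simp)]) hconst,
        map_zero, Pi.zero_apply]
    | of_succ k hk ih =>
      obtain ⟨b, hb⟩ := ih
      exact S.exists_isFacePrimitive_pred (k := ⟨k, hk⟩) hε hb
  obtain ⟨b, hb⟩ := all_faces 0 n.zero_le
  refine ⟨b, fun l hl hl1 ↦ ?_⟩
  have hface : IsSmallOnFace V ε 0 l := ⟨hl, fun q hq j _ ↦ by rw [hl1 q hq, Pi.one_apply]⟩
  exact ⟨by simpa [factors] using hb.coboundary_eq l hface, hb.eq_zero_of_bad l hface⟩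

end UnitCube

/-! ### Integral cocycles and maps to the circle -/

namespace CircleMap

open Topology Filter

/-- The three arcs of length `1 / 3` that make up the circle `ℝ / ℤ`, in clockwise order. -/
def arc (j : Fin 3) : Set UnitAddCircle :=
  (fun r : ℝ ↦ (r : UnitAddCircle)) '' Icc (-(j : ℝ) / 3) ((1 - j) / 3)

lemma isClosed_arc (j : Fin 3) : IsClosed (arc j) :=
  (isCompact_Icc.image (AddCircle.continuous_mk' 1)).isClosed

lemma coe_intCast (m : ℤ) : ((m : ℝ) : UnitAddCircle) = 0 :=
  (AddCircle.coe_eq_zero_iff 1).2 ⟨m, by simp⟩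

lemma coe_mem_arc_iff {r : ℝ} {j : Fin 3} :
    (r : UnitAddCircle) ∈ arc j ↔ ∃ m : ℤ, r - m ∈ Icc (-(j : ℝ) / 3) ((1 - j) / 3) := by
  constructor
  · rintro ⟨s, hs, hsr⟩
    obtain ⟨m, hm⟩ := (AddCircle.coe_eq_zero_iff 1).1 <|
      (AddCircle.coe_sub 1 r s).trans (sub_eq_zero.2 hsr.symm)
    have hm : (m : ℝ) = r - s := by simpa using hm
    exact ⟨m, by rwa [hm, sub_sub_cancel]⟩
  · rintro ⟨m, hm⟩
    exact ⟨r - m, hm, by simp [coe_intCast]⟩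

lemma iUnion_arc : ⋃ j, arc j = univ := by
  refine eq_univ_of_forall fun z ↦ ?_
  obtain ⟨r, rfl⟩ := QuotientAddGroup.mk_surjective z
  obtain ⟨m, hm, hm'⟩ : ∃ m : ℤ, m ≤ r ∧ r < m + 1 :=
    ⟨⌊r⌋, Int.floor_le r, Int.lt_floor_add_one r⟩
  have mem_arc (j : Fin 3) (m : ℤ) (lower : -(j : ℝ) / 3 ≤ r - m) (upper : r - m ≤ (1 - j) / 3) :
      (r : UnitAddCircle) ∈ ⋃ j, arc j :=
    mem_iUnion.2 ⟨j, coe_mem_arc_iff.2 ⟨m, lower, upper⟩⟩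
  rcases le_total r (m + 1 / 3) with h | h
  · exact mem_arc 0 m (by simpa using hm) (by norm_num; linarith)
  rcases le_total r (m + 2 / 3) with h' | h'
  · exact mem_arc 2 (m + 1) (by norm_num; linarith) (by norm_num; linarith)
  · exact mem_arc 1 (m + 1) (by norm_num; linarith) (by norm_num; linarith)

lemma iInter_arc : ⋂ j, arc j = ∅ := by
  refine eq_empty_of_forall_notMem fun z hz ↦ ?_
  obtain ⟨r, rfl⟩ := QuotientAddGroup.mk_surjective z
  have hr (j : Fin 3) := coe_mem_arc_iff.1 (mem_iInter.1 hz j)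
  obtain ⟨m₀, lower₀, upper₀⟩ := hr 0
  obtain ⟨m₁, lower₁, upper₁⟩ := hr 1
  obtain ⟨m₂, lower₂, upper₂⟩ := hr 2
  norm_num at lower₀ upper₀ lower₁ upper₁ lower₂ upper₂
  have h₁₀ : m₁ < m₀ + 1 := by exact_mod_cast (by linarith : (m₁ : ℝ) < m₀ + 1)
  have h₀₁ : m₀ < m₁ + 1 := by exact_mod_cast (by linarith : (m₀ : ℝ) < m₁ + 1)
  obtain rfl : m₀ = m₁ := by omega
  have h₀₂ : m₀ < m₂ := by exact_mod_cast (by linarith : (m₀ : ℝ) < m₂)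
  have h₂₀ : m₂ < m₀ + 1 := by exact_mod_cast (by linarith : (m₂ : ℝ) < m₀ + 1)
  omega

variable {X : Type*} [TopologicalSpace X]

lemma hasThinShrinking_of_circle_map {U : Fin 3 → Set X} {f : X → UnitAddCircle}
    (hf : Continuous f) (hU : ∀ j, ∀ x ∉ U j, f x ∈ arc j) : HasThinShrinking U := by
  refine ⟨fun j ↦ f ⁻¹' (arc j)ᶜ, fun j ↦ (isClosed_arc j).isOpen_compl.preimage hf,
    fun j x hx ↦ not_not.1 fun h ↦ hx (hU j x h), ?_, ?_⟩
  · rw [← preimage_iUnion, ← compl_iInter, iInter_arc, compl_empty, preimage_univ]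
  · rw [← preimage_iInter, ← compl_iUnion, iUnion_arc, compl_univ, preimage_empty]

lemma finsum_smul_add_const {ι : Type*} {s : Set X} (ρ : PartitionOfUnity ι X s) {x : X}
    (hx : x ∈ s) (u : ι → ℝ) (c : ℝ) :
    ∑ᶠ i, ρ i x • (u i + c) = ∑ᶠ i, ρ i x • u i + c := by
  rw [← ρ.sum_finsupport_smul_eq_finsum fun i _ ↦ u i + c,
    ← ρ.sum_finsupport_smul_eq_finsum fun i _ ↦ u i]
  simp only [smul_add, Finset.sum_add_distrib, ← Finset.sum_smul, ρ.sum_finsupport hx, one_smul]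

theorem exists_circle_map [CompactSpace X] [T2Space X] {V : Set (X × X)}
    (hsymm : ∀ x y, (x, y) ∈ V → (y, x) ∈ V) (hV : ∀ x, ∀ᶠ y in 𝓝 x, (x, y) ∈ V) {a : X → X → ℤ}
    (ha : ∀ x y z, (x, y) ∈ V → (y, z) ∈ V → (x, z) ∈ V → a x z = a x y + a y z) (h : X → ℝ) :
    ∃ θ : X → ℝ, Continuous (fun x ↦ (θ x : UnitAddCircle)) ∧
      ∀ x (S : Set ℝ), Convex ℝ S → (∀ w, (x, w) ∈ V → a x w + h w ∈ S) → θ x ∈ S := by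
  obtain ⟨ρ, hρ⟩ := PartitionOfUnity.exists_isSubordinate (s := univ) isClosed_univ
    (fun w : X ↦ interior {y | (w, y) ∈ V}) (fun _ ↦ isOpen_interior)
    fun x _ ↦ mem_iUnion.2 ⟨x, mem_interior_iff_mem_nhds.2 (hV x)⟩
  have close_of_mem_tsupport {w x : X} (hx : x ∈ tsupport (ρ w)) : (x, w) ∈ V :=
    hsymm _ _ (interior_subset (s := {y | (w, y) ∈ V}) (hρ w hx))
  have close_of_ne {w x : X} (hx : ρ w x ≠ 0) : (x, w) ∈ V :=
    close_of_mem_tsupport (subset_tsupport _ hx)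
  refine ⟨fun x ↦ ∑ᶠ w, ρ w x • (a x w + h w), continuous_iff_continuousAt.2 fun x ↦ ?_,
    fun x S hS hxS ↦ ρ.finsum_smul_mem_convex (g := fun w y ↦ a y w + h w) (mem_univ x)
      (fun w hw ↦ hxS w (close_of_ne hw)) hS⟩
  have continuous_frozen : Continuous fun y ↦ ∑ᶠ w, ρ w y • (a x w + h w) :=
    ρ.continuous_finsum_smul fun _ _ _ ↦ continuousAt_const
  refine ((AddCircle.continuous_mk' 1).comp continuous_frozen).continuousAt.congr ?_
  filter_upwards [hV x, ρ.locallyFinite_tsupport.eventually_subset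
    (fun w ↦ isClosed_tsupport (ρ w)) x] with y hxy hy
  have shift : ∑ᶠ w, ρ w y • (a y w + h w) = ∑ᶠ w, ρ w y • (a x w + h w) + a y x := by
    rw [← finsum_smul_add_const ρ (mem_univ y)]
    refine finsum_congr fun w ↦ ?_
    by_cases hw : ρ w y = 0
    · rw [hw, zero_smul, zero_smul]
    · rw [ha y x w (hsymm _ _ hxy) (close_of_mem_tsupport (hy (subset_tsupport _ hw)))
        (close_of_ne hw)]
      push_cast
      ring
  simp only [shift, AddCircle.coe_add, coe_intCast, add_zero]
  rfl

theorem hasThinShrinking_of_primitive [CompactSpace X] [T2Space X] {U : Fin 3 → Set X}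
    {V : Set (X × X)} (hsymm : ∀ x y, (x, y) ∈ V → (y, x) ∈ V)
    (hV : ∀ x, ∀ᶠ y in 𝓝 x, (x, y) ∈ V) {φ γ : X → ℤ} (hφ : ∀ x, φ x = 0 ∨ φ x = 1)
    (hγ : ∀ x, γ x = 0 ∨ γ x = 1) {b : X → X → ℤ}
    (hb : ∀ x y z, (x, y) ∈ V → (y, z) ∈ V → (x, z) ∈ V →
      b y z - b x z + b x y = (φ y - φ x) * (γ z - γ y))
    (hbU : ∀ j, ∀ x ∉ U j, ∀ w, (x, w) ∈ V → b x w = 0)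
    (off₀ : ∀ x ∉ U 0, ∀ w, (x, w) ∈ V → φ x = 0 ∧ φ w = 0)
    (off₁ : ∀ x ∉ U 1, ∀ w, (x, w) ∈ V → φ x = 1 ∧ φ w = 1 ∨ γ x = 0 ∧ γ w = 0)
    (off₂ : ∀ x ∉ U 2, ∀ w, (x, w) ∈ V → φ x = 1 ∧ φ w = 1 ∨ γ x = 1 ∧ γ w = 1) :
    HasThinShrinking U := by
  let a (x y : X) : ℤ := (1 - φ x) * (γ y - γ x) + b x y
  let h (x : X) : ℝ := if φ x = 1 then -1 / 3 else if γ x = 1 then -2 / 3 else 0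
  have cocycle (x y z) (hxy : (x, y) ∈ V) (hyz : (y, z) ∈ V) (hxz : (x, z) ∈ V) :
      a x z = a x y + a y z := by
    linear_combination -hb x y z hxy hyz hxz
  obtain ⟨θ, hθ, hconv⟩ := exists_circle_map hsymm hV cocycle h
  have mem_arc (j : Fin 3) (x : X) (m : ℤ)
      (hm : ∀ w, (x, w) ∈ V → a x w + h w - m ∈ Icc (-(j : ℝ) / 3) ((1 - j) / 3)) :
      (θ x : UnitAddCircle) ∈ arc j := by
    have hθx := hconv x (Icc (m + -(j : ℝ) / 3) (m + (1 - j) / 3)) (convex_Icc _ _) fun w hw ↦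
      ⟨by linarith [(hm w hw).1], by linarith [(hm w hw).2]⟩
    exact coe_mem_arc_iff.2 ⟨m, by linarith [hθx.1], by linarith [hθx.2]⟩
  refine hasThinShrinking_of_circle_map hθ fun j x hx ↦ ?_
  have a_eq (w) (hw : (x, w) ∈ V) : (a x w : ℝ) = (1 - φ x) * (γ w - γ x) := by
    simp [a, hbU j x hx w hw]
  fin_cases j
  · refine mem_arc 0 x (-γ x) fun w hw ↦ ?_
    obtain ⟨φx, φw⟩ := off₀ x hx w hw
    rcases hγ w with γw | γw <;> rw [a_eq w hw] <;> norm_num [h, φx, φw, γw]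
    constructor <;> linarith
  · refine mem_arc 1 x 0 fun w hw ↦ ?_
    rcases off₁ x hx w hw with ⟨φx, φw⟩ | ⟨γx, γw⟩
    · rw [a_eq w hw]; norm_num [h, φx, φw]
    · rcases hφ w with φw | φw <;> rw [a_eq w hw] <;> norm_num [h, γx, γw, φw]
  · refine mem_arc 2 x 0 fun w hw ↦ ?_
    rcases off₂ x hx w hw with ⟨φx, φw⟩ | ⟨γx, γw⟩
    · rw [a_eq w hw]; norm_num [h, φx, φw]
    · rcases hφ w with φw | φw <;> rw [a_eq w hw] <;> norm_num [h, γx, γw, φw]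

end CircleMap

/-! ### Functions without common zeros -/

namespace UnitCube

open Topology Filter Uniformity ListCochain

variable {X : Type*} {n : ℕ}

/-- On the lists that are small in the sense of `V` and `ε`, the functions `φ` and `γ` take the
values that determine, off each member of `U`, a third of the circle. -/
structure SmallListSigns (V : Set (X × X)) (ε : ℝ) (U : Fin 3 → Set X) (φ γ : X × UnitCube n → ℤ) :
    Prop where
  off₀ : ∀ l, IsSmall V ε l → ∀ q ∈ l, q.1 ∉ U 0 → ∀ p ∈ l, φ p = 0
  off₁ : ∀ l, IsSmall V ε l → ∀ q ∈ l, q.1 ∉ U 1 → (∀ p ∈ l, φ p = 1) ∨ ∀ p ∈ l, γ p = 0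
  off₂ : ∀ l, IsSmall V ε l → ∀ q ∈ l, q.1 ∉ U 2 → (∀ p ∈ l, φ p = 1) ∨ ∀ p ∈ l, γ p = 1

lemma SmallListSigns.exists_constOn {V : Set (X × X)} {ε : ℝ} {U : Fin 3 → Set X}
    {φ γ : X × UnitCube n → ℤ} (S : SmallListSigns V ε U φ γ) {l : List (X × UnitCube n)}
    (hl : IsSmall V ε l) {q : X × UnitCube n} (hq : q ∈ l) {j : Fin 3} (hqj : q.1 ∉ U j) :
    ∃ ψ ∈ [φ, γ], ConstOn ψ l := by
  suffices (∃ a, ∀ p ∈ l, φ p = a) ∨ ∃ a, ∀ p ∈ l, γ p = a by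
    rcases this with ⟨a, h⟩ | ⟨a, h⟩
    exacts [⟨φ, by simp, ConstOn.of_forall_eq h⟩, ⟨γ, by simp, ConstOn.of_forall_eq h⟩]
  match j with
  | 0 => exact .inl ⟨0, S.off₀ l hl q hq hqj⟩
  | 1 => exact (S.off₁ l hl q hq hqj).imp (⟨1, ·⟩) (⟨0, ·⟩)
  | 2 => exact (S.off₂ l hl q hq hqj).imp (⟨1, ·⟩) (⟨1, ·⟩)

lemma isSmall_triple {V : Set (X × X)} {ε : ℝ} (hε : 0 ≤ ε)
    (hrefl : ∀ x, (x, x) ∈ V) (hsymm : ∀ x y, (x, y) ∈ V → (y, x) ∈ V) {x y z : X}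
    (hxy : (x, y) ∈ V) (hyz : (y, z) ∈ V) (hxz : (x, z) ∈ V) (c : UnitCube n) :
    IsSmall V ε [(x, c), (y, c), (z, c)] := by
  intro p hp q hq
  simp only [List.mem_cons, List.not_mem_nil, or_false] at hp hq
  rcases hp with rfl | rfl | rfl <;> rcases hq with rfl | rfl | rfl <;>
    simp [hε, hrefl, hxy, hyz, hxz, hsymm _ _ hxy, hsymm _ _ hyz, hsymm _ _ hxz]

theorem SignSystem.hasThinShrinking [TopologicalSpace X] [CompactSpace X] [T2Space X]
    {V : Set (X × X)} {ε : ℝ} (hε : 0 < ε) (hsymm : ∀ x y, (x, y) ∈ V → (y, x) ∈ V)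
    (hV : ∀ x, ∀ᶠ y in 𝓝 x, (x, y) ∈ V) {U : Fin 3 → Set X} {φ γ : X × UnitCube n → ℤ}
    {χ : Fin n → X × UnitCube n → ℤ} (S : SignSystem V ε {x | ∃ j, x ∉ U j} [φ, γ] χ)
    (hU : SmallListSigns V ε U φ γ) (hφ : ∀ q, φ q = 0 ∨ φ q = 1) (hγ : ∀ q, γ q = 0 ∨ γ q = 1) :
    HasThinShrinking U := by
  obtain ⟨b, hb⟩ := S.exists_primitive hε
  have hrefl (x) : (x, x) ∈ V := (hV x).self_of_nhds
  let e (x : X) : X × UnitCube n := (x, 1)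
  have small₃ (x y z) (hxy : (x, y) ∈ V) (hyz : (y, z) ∈ V) (hxz : (x, z) ∈ V) :
      IsSmall V ε [e x, e y, e z] := isSmall_triple hε.le hrefl hsymm hxy hyz hxz 1
  have small₂ (x w) (hxw : (x, w) ∈ V) : IsSmall V ε [e x, e w] := fun p hp q hq ↦
    small₃ x x w (hrefl x) hxw hxw p (List.mem_cons_of_mem _ hp) q (List.mem_cons_of_mem _ hq)
  refine CircleMap.hasThinShrinking_of_primitive hsymm hV (fun x ↦ hφ (e x)) (fun x ↦ hγ (e x))
    (b := fun x w ↦ b [e x, e w]) (fun x y z hxy hyz hxz ↦ ?_) (fun j x hx w hxw ↦ ?_)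
    (fun x hx w hxw ↦ ?_) (fun x hx w hxw ↦ ?_) fun x hx w hxw ↦ ?_
  · have := (hb _ (small₃ x y z hxy hyz hxz) (by simp [e])).1
    simp only [coboundary_cons, coboundary_nil, cupProd_cons, dcup_cons_cons] at this
    simp [cupProd, ofFun] at this
    linear_combination this
  · exact (hb _ (small₂ x w hxw) (by simp [e])).2 (e x) (by simp) ⟨j, hx⟩
  · have := hU.off₀ _ (small₂ x w hxw) (e x) (by simp) hx
    exact ⟨this _ (by simp), this _ (by simp)⟩
  · exact (hU.off₁ _ (small₂ x w hxw) (e x) (by simp) hx).imp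
      (fun h ↦ ⟨h _ (by simp), h _ (by simp)⟩) fun h ↦ ⟨h _ (by simp), h _ (by simp)⟩
  · exact (hU.off₂ _ (small₂ x w hxw) (e x) (by simp) hx).imp
      (fun h ↦ ⟨h _ (by simp), h _ (by simp)⟩) fun h ↦ ⟨h _ (by simp), h _ (by simp)⟩

lemma eventually_smallSets_exists_forall_mem {Q ι : Type*} [UniformSpace Q] {C : Set Q}
    (hC : IsCompact C) {O : ι → Set Q} (hO : ∀ i, IsOpen (O i)) (hCO : C ⊆ ⋃ i, O i) :
    ∀ᶠ V in (𝓤 Q).smallSets, ∀ l : List Q, (∀ p ∈ l, ∀ q ∈ l, (p, q) ∈ V) →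
      ∀ q ∈ l, q ∈ C → ∃ i, ∀ p ∈ l, p ∈ O i := by
  obtain ⟨V, hV, hVO⟩ := lebesgue_number_lemma hC hO hCO
  refine eventually_smallSets.2 ⟨V, hV, fun V' hV' l hl q hq hqC ↦ ?_⟩
  obtain ⟨i, hi⟩ := hVO q hqC
  exact ⟨i, fun p hp ↦ hi (hV' (hl q hq p hp))⟩

lemma eventually_smallSets_forall_mem {Q : Type*} [UniformSpace Q] {C O : Set Q}
    (hC : IsCompact C) (hO : IsOpen O) (hCO : C ⊆ O) :
    ∀ᶠ V in (𝓤 Q).smallSets, ∀ l : List Q, (∀ p ∈ l, ∀ q ∈ l, (p, q) ∈ V) →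
      ∀ q ∈ l, q ∈ C → ∀ p ∈ l, p ∈ O := by
  simpa using eventually_smallSets_exists_forall_mem hC (fun _ : Unit ↦ hO) (by rwa [iUnion_const])

lemma eventually_smallSets_forall_mem_or {Q : Type*} [UniformSpace Q] {C O₁ O₂ : Set Q}
    (hC : IsCompact C) (hO₁ : IsOpen O₁) (hO₂ : IsOpen O₂) (hCO : C ⊆ O₁ ∪ O₂) :
    ∀ᶠ V in (𝓤 Q).smallSets, ∀ l : List Q, (∀ p ∈ l, ∀ q ∈ l, (p, q) ∈ V) →
      ∀ q ∈ l, q ∈ C → (∀ p ∈ l, p ∈ O₁) ∨ ∀ p ∈ l, p ∈ O₂ := by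
  simpa [or_comm] using eventually_smallSets_exists_forall_mem hC
    (O := fun b : Bool ↦ cond b O₁ O₂) (Bool.forall_bool.2 ⟨hO₂, hO₁⟩)
    (by rwa [union_eq_iUnion] at hCO)

/-- The indicator function of `{q | 0 < f q}`. -/
noncomputable def signFun {Q : Type*} (f : Q → ℝ) (q : Q) : ℤ :=
  if 0 < f q then 1 else 0

lemma signFun_of_pos {Q : Type*} {f : Q → ℝ} {q : Q} (h : 0 < f q) : signFun f q = 1 :=
  if_pos h

lemma signFun_of_neg {Q : Type*} {f : Q → ℝ} {q : Q} (h : f q < 0) : signFun f q = 0 :=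
  if_neg h.not_gt

lemma signFun_eq_zero_or_one {Q : Type*} (f : Q → ℝ) (q : Q) :
    signFun f q = 0 ∨ signFun f q = 1 :=
  (ite_eq_or_eq ..).symm

lemma eventually_smallSets_exists_constOn_signFun {Q ι : Type*} [UniformSpace Q] [CompactSpace Q]
    [Nonempty ι] {f : ι → Q → ℝ} (hf : ∀ i, Continuous (f i)) (h0 : ∀ q, ∃ i, f i q ≠ 0) :
    ∀ᶠ V in (𝓤 Q).smallSets, ∀ l : List Q, (∀ p ∈ l, ∀ q ∈ l, (p, q) ∈ V) →
      ∃ i, ConstOn (signFun (f i)) l := by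
  let O (i : ι × Bool) : Set Q := bif i.2 then {q | 0 < f i.1 q} else {q | f i.1 q < 0}
  have isOpen_O : ∀ i, IsOpen (O i)
    | (i, true) => isOpen_lt continuous_const (hf i)
    | (i, false) => isOpen_lt (hf i) continuous_const
  have cover : univ ⊆ ⋃ i, O i := fun q _ ↦ by
    obtain ⟨i, hi⟩ := h0 q
    rcases hi.lt_or_gt with hi | hi
    exacts [mem_iUnion.2 ⟨(i, false), hi⟩, mem_iUnion.2 ⟨(i, true), hi⟩]
  filter_upwards [eventually_smallSets_exists_forall_mem isCompact_univ isOpen_O cover]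
    with V hV l hl
  match l with
  | [] => exact ⟨Classical.arbitrary ι, by simp [ConstOn]⟩
  | q :: l =>
    match hV _ hl q List.mem_cons_self (mem_univ q) with
    | ⟨(i, true), hi⟩ => exact ⟨i, .of_forall_eq fun p hp ↦ signFun_of_pos (hi p hp)⟩
    | ⟨(i, false), hi⟩ => exact ⟨i, .of_forall_eq fun p hp ↦ signFun_of_neg (hi p hp)⟩

/-- The pairs of points of `X × UnitCube n` that are `V`-close in `X` and `ε`-close in the cube. -/
def closePairs (V : Set (X × X)) (ε : ℝ) : Set ((X × UnitCube n) × (X × UnitCube n)) :=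
  {p | (p.1.1, p.2.1) ∈ V ∧ dist p.1.2 p.2.2 ≤ ε}

lemma exists_closePairs_mem [UniformSpace X] {P : Set ((X × UnitCube n) × (X × UnitCube n)) → Prop}
    (hP : ∀ᶠ W in (𝓤 (X × UnitCube n)).smallSets, P W) :
    ∃ V ∈ 𝓤 X, (∀ x y, (x, y) ∈ V → (y, x) ∈ V) ∧ ∃ ε > 0, P (closePairs V ε) := by
  obtain ⟨W, hW, hWP⟩ := eventually_smallSets.1 hP
  obtain ⟨V₁, hV₁, V₂, hV₂, hVW⟩ := entourageProd_subset hW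
  obtain ⟨V, hV, hVsymm, hVV⟩ := symm_of_uniformity hV₁
  obtain ⟨ε, hε, hεV⟩ := Metric.mem_uniformity_dist.1 hV₂
  refine ⟨V, hV, fun _ _ ↦ hVsymm.symm _ _, ε / 2, half_pos hε, hWP _ fun p hp ↦ hVW ⟨hVV hp.1, ?_⟩⟩
  exact hεV (hp.2.trans_lt (half_lt_self hε))

/-- The functions `Φ` and `Γ` on `X × UnitCube n` have, off each member of `U`, the signs that
determine a third of the circle of directions of `(Φ, Γ)`. -/
structure IsSignedPair (U : Fin 3 → Set X) (Φ Γ : X × UnitCube n → ℝ) : Prop where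
  off₀ : ∀ q, q.1 ∉ U 0 → Φ q < 0
  off₁ : ∀ q, q.1 ∉ U 1 → 0 < Φ q ∨ Γ q < 0
  off₂ : ∀ q, q.1 ∉ U 2 → 0 < Φ q ∨ 0 < Γ q

lemma IsSignedPair.eventually_smallListSigns [UniformSpace X] [CompactSpace X] {U : Fin 3 → Set X}
    {Φ Γ : X × UnitCube n → ℝ} (h : IsSignedPair U Φ Γ) (hU : ∀ j, IsOpen (U j))
    (hΦ : Continuous Φ) (hΓ : Continuous Γ) :
    ∀ᶠ W in (𝓤 (X × UnitCube n)).smallSets, ∀ V ε, closePairs V ε = W →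
      SmallListSigns V ε U (signFun Φ) (signFun Γ) := by
  have compact (j : Fin 3) : IsCompact {q : X × UnitCube n | q.1 ∉ U j} :=
    ((hU j).isClosed_compl.preimage continuous_fst).isCompact
  have pos {f : X × UnitCube n → ℝ} (hf : Continuous f) : IsOpen {q | 0 < f q} :=
    isOpen_lt continuous_const hf
  have neg {f : X × UnitCube n → ℝ} (hf : Continuous f) : IsOpen {q | f q < 0} :=
    isOpen_lt hf continuous_const
  filter_upwards [eventually_smallSets_forall_mem (compact 0) (neg hΦ) h.off₀,
    eventually_smallSets_forall_mem_or (compact 1) (pos hΦ) (neg hΓ) h.off₁,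
    eventually_smallSets_forall_mem_or (compact 2) (pos hΦ) (pos hΓ) h.off₂]
    with W h₀ h₁ h₂ V ε hW
  subst hW
  refine ⟨fun l hl q hq hqU p hp ↦ signFun_of_neg (h₀ l hl q hq hqU p hp),
    fun l hl q hq hqU ↦ ?_, fun l hl q hq hqU ↦ ?_⟩
  · exact (h₁ l hl q hq hqU).imp (fun h p hp ↦ signFun_of_pos (h p hp))
      fun h p hp ↦ signFun_of_neg (h p hp)
  · exact (h₂ l hl q hq hqU).imp (fun h p hp ↦ signFun_of_pos (h p hp))
      fun h p hp ↦ signFun_of_pos (h p hp)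

/-- The functions `κ i` on `X × UnitCube n` separate opposite faces of the cube. -/
structure SeparatesFaces (κ : Fin n → X × UnitCube n → ℝ) : Prop where
  neg : ∀ i q, q.2 i = 0 → κ i q < 0
  pos : ∀ i q, q.2 i = 1 → 0 < κ i q

lemma SeparatesFaces.eventually_signFun [UniformSpace X] [CompactSpace X]
    {κ : Fin n → X × UnitCube n → ℝ} (h : SeparatesFaces κ) (hκ : ∀ i, Continuous (κ i)) :
    ∀ᶠ W in (𝓤 (X × UnitCube n)).smallSets, ∀ i, ∀ l : List (X × UnitCube n),
      (∀ p ∈ l, ∀ q ∈ l, (p, q) ∈ W) → ∀ q ∈ l,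
        (q.2 i = 0 → ∀ p ∈ l, signFun (κ i) p = 0) ∧
          (q.2 i = 1 → ∀ p ∈ l, signFun (κ i) p = 1) := by
  have compact (i : Fin n) (t : unitInterval) : IsCompact {q : X × UnitCube n | q.2 i = t} :=
    (isClosed_eq (by fun_prop) continuous_const).isCompact
  refine eventually_all.2 fun i ↦ ?_
  filter_upwards [
    eventually_smallSets_forall_mem (compact i 0) (isOpen_lt (hκ i) continuous_const) (h.neg i),
    eventually_smallSets_forall_mem (compact i 1) (isOpen_lt continuous_const (hκ i)) (h.pos i)]
    with W h₀ h₁ l hl q hq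
  exact ⟨fun hqi p hp ↦ signFun_of_neg (h₀ l hl q hq hqi p hp),
    fun hqi p hp ↦ signFun_of_pos (h₁ l hl q hq hqi p hp)⟩

theorem IsSignedPair.hasThinShrinking [TopologicalSpace X] [CompactSpace X] [T2Space X]
    {U : Fin 3 → Set X} {Φ Γ : X × UnitCube n → ℝ} {κ : Fin n → X × UnitCube n → ℝ}
    (h : IsSignedPair U Φ Γ) (hfaces : SeparatesFaces κ) (hU : ∀ j, IsOpen (U j))
    (hΦ : Continuous Φ) (hΓ : Continuous Γ) (hκ : ∀ i, Continuous (κ i))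
    (h0 : ∀ q, Φ q ≠ 0 ∨ Γ q ≠ 0 ∨ ∃ i, κ i q ≠ 0) : HasThinShrinking U := by
  let _ : UniformSpace X := uniformSpaceOfCompactR1
  have hf : ∀ i : Option (Option (Fin n)), Continuous (i.elim Φ fun i ↦ i.elim Γ κ)
    | none => hΦ
    | some none => hΓ
    | some (some i) => hκ i
  have signs := eventually_smallSets_exists_constOn_signFun hf fun q ↦ by
    rcases h0 q with h | h | ⟨i, h⟩
    exacts [⟨none, h⟩, ⟨some none, h⟩, ⟨some (some i), h⟩]
  obtain ⟨V, hV, hsymm, ε, hε, signs, smallListSigns, faces⟩ := exists_closePairs_mem <|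
    signs.and <| (h.eventually_smallListSigns hU hΦ hΓ).and (hfaces.eventually_signFun hκ)
  have hsmall := smallListSigns V ε rfl
  refine SignSystem.hasThinShrinking hε hsymm (fun x ↦ mem_nhds_left x hV)
    (χ := fun i ↦ signFun (κ i)) ⟨fun l hl ↦ ?_, fun l hl q hq ⟨j, hj⟩ ↦ ?_, ?_, ?_⟩ hsmall
    (signFun_eq_zero_or_one Φ) (signFun_eq_zero_or_one Γ)
  · match signs l hl with
    | ⟨none, hconst⟩ => exact ⟨signFun Φ, by simp, hconst⟩
    | ⟨some none, hconst⟩ => exact ⟨signFun Γ, by simp, hconst⟩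
    | ⟨some (some i), hconst⟩ => exact ⟨signFun (κ i), by simp, hconst⟩
  · exact hsmall.exists_constOn hl hq hj
  · exact fun l hl i q hq ↦ (faces i l hl q hq).1
  · exact fun l hl i q hq ↦ (faces i l hl q hq).2

end UnitCube

/-! ### The hyperspace of subcontinua -/

namespace Subcontinua

open Topology Filter

variable {X Y : Type*} [TopologicalSpace X] [TopologicalSpace Y]

instance : SetLike (Subcontinua X) X := ⟨Subtype.val, Subtype.val_injective⟩

instance : PartialOrder (Subcontinua X) := .ofSetLike (Subcontinua X) X

lemma isClosed (A : Subcontinua X) : IsClosed (A : Set X) := A.2.1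

lemma isConnected (A : Subcontinua X) : IsConnected (A : Set X) := A.2.2

lemma nonempty (A : Subcontinua X) : (A : Set X).Nonempty := A.isConnected.nonempty

lemma isOpen_setOf_subset {U : Set X} (hU : IsOpen U) :
    IsOpen {A : Subcontinua X | (A : Set X) ⊆ U} :=
  isOpen_generateFrom_of_mem (.inl ⟨U, hU, rfl⟩)

lemma isOpen_setOf_inter_nonempty {U : Set X} (hU : IsOpen U) :
    IsOpen {A : Subcontinua X | ((A : Set X) ∩ U).Nonempty} :=
  isOpen_generateFrom_of_mem (.inr ⟨U, hU, rfl⟩)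

lemma isClosed_setOf_subset {C : Set X} (hC : IsClosed C) :
    IsClosed {A : Subcontinua X | (A : Set X) ⊆ C} := by
  simpa only [← isOpen_compl_iff, compl_ofPred, ← inter_compl_nonempty_iff] using
    isOpen_setOf_inter_nonempty hC.isOpen_compl

lemma isClosed_setOf_mem [T1Space X] (x : X) : IsClosed {A : Subcontinua X | x ∈ A} := by
  simpa only [← isOpen_compl_iff, compl_ofPred, subset_compl_singleton_iff, SetLike.mem_coe] using
    isOpen_setOf_subset (isOpen_compl_singleton (x := x))

instance [T1Space X] : ClosedIciTopology (Subcontinua X) where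
  isClosed_Ici A := by
    have : Ici A = ⋂ x ∈ A, {B : Subcontinua X | x ∈ B} := by ext B; simp [SetLike.le_def]
    exact this ▸ isClosed_biInter fun x _ ↦ isClosed_setOf_mem x

instance : ClosedIicTopology (Subcontinua X) where
  isClosed_Iic A := isClosed_setOf_subset A.isClosed

lemma exists_isOpen_forall_mem_of_mem_nhds {N : Subcontinua X} {V : Set (Subcontinua X)}
    (hV : V ∈ 𝓝 N) : ∃ U, IsOpen U ∧ (N : Set X) ⊆ U ∧
      ∀ A : Subcontinua X, N ≤ A → (A : Set X) ⊆ U → A ∈ V := by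
  have hle : comap (↑) (𝓝ˢ (N : Set X)).smallSets ⊓ 𝓟 (Ici N) ≤ 𝓝 N := by
    rw [nhds_generateFrom]
    refine le_iInf₂ fun s ⟨hNs, hs⟩ ↦ ?_
    rcases hs with ⟨U, hU, rfl⟩ | ⟨U, -, rfl⟩
    · exact inf_le_left.trans <| le_principal_iff.2 <| preimage_mem_comap <|
        eventually_smallSets_subset.2 (hU.mem_nhdsSet.2 hNs)
    · exact inf_le_right.trans <| principal_mono.2 fun A hNA ↦
        hNs.mono (inter_subset_inter_left U hNA)
  obtain ⟨S, hS, hSV⟩ := mem_comap.1 (mem_inf_principal.1 (hle hV))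
  obtain ⟨W, hW, hWS⟩ := eventually_smallSets.1 hS
  obtain ⟨U, hU, hNU, hUW⟩ := mem_nhdsSet_iff_exists.1 hW
  exact ⟨U, hU, hNU, fun A hNA hAU ↦ hSV (hWS A (hAU.trans hUW)) hNA⟩

lemma isInducing_coe : @IsInducing _ _ _ (.vietoris X) ((↑) : Subcontinua X → Set X) := by
  let _ : TopologicalSpace (Set X) := .vietoris X
  refine ⟨(?_ : instTopologicalSpace X = _)⟩
  rw [TopologicalSpace.vietoris, induced_generateFrom_eq, image_union, instTopologicalSpace]
  congr 1 with s
  simp only [mem_union, mem_ofPred_eq, mem_image, exists_exists_and_eq_and, eq_comm (a := s)]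
  rfl

lemma isClosed_setOf_isPreconnected_coe [CompactSpace X] [T2Space X] :
    IsClosed {K : NonemptyCompacts X | IsPreconnected (K : Set X)} := by
  refine isOpen_compl_iff.1 <| isOpen_iff_mem_nhds.2 fun K hK ↦ ?_
  simp only [mem_compl_iff, mem_ofPred_eq,
    isPreconnected_iff_subset_of_fully_disjoint_closed K.isCompact.isClosed] at hK
  push Not at hK
  obtain ⟨s, t, hs, ht, hKst, hst, hKs, hKt⟩ := hK
  obtain ⟨U, V, hU, hV, hsU, htV, hUV⟩ := normal_separation hs ht hst
  have hUV' : IsOpen {L : NonemptyCompacts X | (L : Set X) ⊆ U ∪ V ∧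
      ((L : Set X) ∩ U).Nonempty ∧ ((L : Set X) ∩ V).Nonempty} :=
    (NonemptyCompacts.isOpen_subsets_of_isOpen (hU.union hV)).inter
      ((NonemptyCompacts.isOpen_inter_nonempty_of_isOpen hU).inter
        (NonemptyCompacts.isOpen_inter_nonempty_of_isOpen hV))
  obtain ⟨x, hxK, hx⟩ := not_subset.1 hKs
  obtain ⟨y, hyK, hy⟩ := not_subset.1 hKt
  refine mem_of_superset (hUV'.mem_nhds ⟨hKst.trans (union_subset_union hsU htV),
    ⟨y, hyK, hsU ((hKst hyK).resolve_right hy)⟩, x, hxK, htV ((hKst hxK).resolve_left hx)⟩) ?_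
  rintro L ⟨hL, hLU, hLV⟩ hconn
  obtain ⟨z, -, hzU, hzV⟩ := hconn U V hU hV hL hLU hLV
  exact disjoint_left.1 hUV hzU hzV

/-- A subcontinuum of a compact space, regarded as a nonempty compact set. -/
def toNonemptyCompacts [CompactSpace X] (A : Subcontinua X) : NonemptyCompacts X :=
  ⟨⟨A, A.isClosed.isCompact⟩, A.nonempty⟩

lemma isClosedEmbedding_toNonemptyCompacts [CompactSpace X] [T2Space X] :
    IsClosedEmbedding (toNonemptyCompacts : Subcontinua X → NonemptyCompacts X) := by
  let _ : TopologicalSpace (Set X) := .vietoris X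
  refine ⟨⟨NonemptyCompacts.isEmbedding_coe.isInducing.of_comp_iff.1 isInducing_coe,
    fun A B h ↦ SetLike.coe_injective (congrArg ((↑) : NonemptyCompacts X → Set X) h)⟩, ?_⟩
  convert isClosed_setOf_isPreconnected_coe (X := X)
  ext K
  exact ⟨fun ⟨A, hA⟩ ↦ hA ▸ A.isConnected.isPreconnected,
    fun hK ↦ ⟨⟨K, K.isCompact.isClosed, K.nonempty, hK⟩, rfl⟩⟩

instance [CompactSpace X] [T2Space X] : CompactSpace (Subcontinua X) :=
  isClosedEmbedding_toNonemptyCompacts.compactSpace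

instance [CompactSpace X] [T2Space X] : T2Space (Subcontinua X) :=
  isClosedEmbedding_toNonemptyCompacts.isEmbedding.t2Space

lemma isClosed_biUnion_coe [CompactSpace X] [T2Space X] {S : Set (Subcontinua X)}
    (hS : IsClosed S) : IsClosed (⋃ A ∈ S, (A : Set X)) := by
  have := NonemptyCompacts.isCompact_biUnion_coe_of_isCompact
    (hS.isCompact.image isClosedEmbedding_toNonemptyCompacts.continuous)
  rw [biUnion_image] at this
  exact this.isClosed

/-- The image of a subcontinuum under a continuous map. -/
def map [CompactSpace X] [T2Space Y] (p : C(X, Y)) (A : Subcontinua X) : Subcontinua Y :=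
  ⟨p '' A, (A.isClosed.isCompact.image p.continuous).isClosed,
    A.isConnected.image p p.continuous.continuousOn⟩

@[simp]
lemma coe_map [CompactSpace X] [T2Space Y] (p : C(X, Y)) (A : Subcontinua X) :
    (map p A : Set Y) = p '' A := rfl

lemma continuous_map [CompactSpace X] [T2Space Y] (p : C(X, Y)) : Continuous (map p) := by
  refine continuous_generateFrom_iff.2 ?_
  rintro _ (⟨U, hU, rfl⟩ | ⟨U, hU, rfl⟩)
  · convert isOpen_setOf_subset (hU.preimage p.continuous) using 1
    ext A
    exact image_subset_iff
  · convert isOpen_setOf_inter_nonempty (hU.preimage p.continuous) using 1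
    ext A
    exact image_inter_nonempty_iff

/-- The maximum of a continuous function over a subcontinuum. -/
noncomputable def supOn (h : C(X, ℝ)) (A : Subcontinua X) : ℝ :=
  sSup (h '' A)

section supOn

variable [CompactSpace X] (h : C(X, ℝ)) (A B : Subcontinua X)

lemma exists_eq_supOn : ∃ x ∈ A, h x = supOn h A :=
  (A.isClosed.isCompact.image h.continuous).sSup_mem (A.nonempty.image h)

variable {h A B}

lemma le_supOn {x : X} (hx : x ∈ A) : h x ≤ supOn h A :=
  le_csSup (A.isClosed.isCompact.image h.continuous).bddAbove (mem_image_of_mem h hx)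

lemma supOn_le_iff {c : ℝ} : supOn h A ≤ c ↔ ∀ x ∈ A, h x ≤ c := by
  refine ⟨fun hA x hx ↦ (le_supOn hx).trans hA, fun hA ↦ ?_⟩
  obtain ⟨x, hx, hxA⟩ := exists_eq_supOn h A
  exact hxA ▸ hA x hx

lemma supOn_lt_iff {c : ℝ} : supOn h A < c ↔ ∀ x ∈ A, h x < c := by
  refine ⟨fun hA x hx ↦ (le_supOn hx).trans_lt hA, fun hA ↦ ?_⟩
  obtain ⟨x, hx, hxA⟩ := exists_eq_supOn h A
  exact hxA ▸ hA x hx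

lemma lt_supOn_iff {c : ℝ} : c < supOn h A ↔ ∃ x ∈ A, c < h x := by
  simpa only [not_le, not_forall, exists_prop] using (supOn_le_iff (h := h) (A := A) (c := c)).not

lemma supOn_mem_Icc (hh : ∀ x, h x ∈ Icc (0 : ℝ) 1) :
    supOn h A ∈ Icc (0 : ℝ) 1 := by
  obtain ⟨x, -, hx⟩ := exists_eq_supOn h A
  exact hx ▸ hh x

lemma continuous_supOn : Continuous (supOn h) := by
  refine OrderTopology.continuous_iff.2 fun c ↦ ⟨?_, ?_⟩
  · convert isOpen_setOf_inter_nonempty ((isOpen_Ioi (a := c)).preimage h.continuous) using 1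
    ext A
    exact lt_supOn_iff
  · convert isOpen_setOf_subset ((isOpen_Iio (a := c)).preimage h.continuous) using 1
    ext A
    exact supOn_lt_iff

lemma supOn_map [T2Space Y] (p : C(X, Y)) (f : C(Y, ℝ)) :
    supOn f (map p A) = supOn (f.comp p) A := by
  simp only [supOn, coe_map, image_image, ContinuousMap.comp_apply]

end supOn

end Subcontinua

/-! ### Subcontinua of compact spaces -/

section Continua

open Topology Filter Subcontinua

variable {X : Type*} [TopologicalSpace X] [CompactSpace X] [T2Space X]

lemma exists_isClopen_of_disjoint_connectedComponents {E₀ E₁ : Set X} (hE₀ : IsClosed E₀)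
    (hE₁ : IsClosed E₁) (h : ∀ x ∈ E₀, ∀ y ∈ E₁, connectedComponent x ≠ connectedComponent y) :
    ∃ D, IsClopen D ∧ E₀ ⊆ D ∧ Disjoint D E₁ := by
  have hcont := ConnectedComponents.continuous_coe (α := X)
  obtain ⟨D, hD, hD₀, hD₁⟩ := exists_clopen_of_closed_subset_open
    (Z := ConnectedComponents.mk '' E₀) (U := (ConnectedComponents.mk '' E₁)ᶜ)
    (hcont.isClosedMap _ hE₀) (hcont.isClosedMap _ hE₁).isOpen_compl <| by
      rintro _ ⟨x, hx, rfl⟩ ⟨y, hy, hxy⟩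
      exact h x hx y hy (ConnectedComponents.coe_eq_coe.1 hxy).symm
  exact ⟨_, hD.preimage hcont, image_subset_iff.1 hD₀,
    disjoint_left.2 fun x hxD hx ↦ hD₁ hxD (mem_image_of_mem _ hx)⟩

/-- The cut-wire theorem. -/
lemma exists_isClosed_partition_of_forall_disjoint {Y E₀ E₁ : Set X} (hY : IsClosed Y)
    (hE₀ : IsClosed E₀) (hE₁ : IsClosed E₁)
    (h : ∀ A : Subcontinua X, (A : Set X) ⊆ Y → Disjoint (A : Set X) E₀ ∨ Disjoint (A : Set X) E₁) :
    ∃ D₀ D₁ : Set X, IsClosed D₀ ∧ IsClosed D₁ ∧ D₀ ∪ D₁ = Y ∧ Disjoint D₀ D₁ ∧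
      Disjoint D₀ E₁ ∧ Disjoint D₁ E₀ := by
  have : CompactSpace Y := isCompact_iff_compactSpace.1 hY.isCompact
  have hval : IsClosedEmbedding ((↑) : Y → X) := hY.isClosedEmbedding_subtypeVal
  obtain ⟨D, hD, hD₀, hD₁⟩ := exists_isClopen_of_disjoint_connectedComponents
    (hE₀.preimage hval.continuous) (hE₁.preimage hval.continuous) fun x hx y hy hxy ↦ by
      let A := map ⟨((↑) : Y → X), hval.continuous⟩
        ⟨connectedComponent x, isClosed_connectedComponent, isConnected_connectedComponent⟩
      have hxA : (x : X) ∈ A := mem_image_of_mem _ mem_connectedComponent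
      have hyA : (y : X) ∈ A := mem_image_of_mem _ (connectedComponent_eq_iff_mem.1 hxy.symm)
      rcases h A (Subtype.coe_image_subset _ _) with h | h
      exacts [disjoint_left.1 h hxA hx, disjoint_left.1 h hyA hy]
  refine ⟨(↑) '' D, (↑) '' Dᶜ, hval.isClosedMap _ hD.isClosed, hval.isClosedMap _ hD.compl.isClosed,
    ?_, (disjoint_image_iff hval.injective).2 disjoint_compl_right, ?_, ?_⟩
  · rw [← image_union, union_compl_self, image_univ, Subtype.range_coe]
  · exact disjoint_image_left.2 hD₁
  · exact disjoint_image_left.2 (disjoint_compl_left_iff_subset.2 hD₀)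

/-- Boundary bumping. -/
lemma exists_lt_le_subset_of_lt {N B : Subcontinua X} (hNB : N < B) {U : Set X} (hU : IsOpen U)
    (hNU : (N : Set X) ⊆ U) : ∃ A : Subcontinua X, N < A ∧ A ≤ B ∧ (A : Set X) ⊆ U := by
  obtain ⟨b, hbB, hbN⟩ := SetLike.exists_of_lt hNB
  obtain ⟨W, hW, hNW, hWU⟩ := normal_exists_closure_subset N.isClosed
    (hU.sdiff (isClosed_singleton (x := b))) (subset_sdiff_singleton hNU hbN)
  suffices ∃ C : Subcontinua X, (C : Set X) ⊆ B ∩ closure W ∧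
      ((C : Set X) ∩ N).Nonempty ∧ ((C : Set X) ∩ Wᶜ).Nonempty by
    obtain ⟨C, hC, hCN, x, hxC, hxW⟩ := this
    refine ⟨⟨N ∪ C, N.isClosed.union C.isClosed, N.isConnected.union (inter_comm _ _ ▸ hCN)
      C.isConnected⟩, SetLike.lt_iff_le_and_exists.2 ⟨subset_union_left, x, Or.inr hxC,
      fun hxN ↦ hxW (hNW hxN)⟩, union_subset hNB.le fun y hy ↦ (hC hy).1,
      union_subset hNU fun y hy ↦ (hWU (hC hy).2).1⟩
  by_contra! h
  obtain ⟨D₀, D₁, hD₀, hD₁, hD, hD₀₁, hD₀W, hD₁N⟩ := exists_isClosed_partition_of_forall_disjoint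
    (B.isClosed.inter isClosed_closure) N.isClosed hW.isClosed_compl fun C hC ↦ by
      simpa only [disjoint_iff_inter_eq_empty, or_iff_not_imp_left, ← nonempty_iff_ne_empty]
        using h C hC
  have hND₀ : (N : Set X) ⊆ D₀ := fun x hx ↦
    ((hD.ge ⟨hNB.le hx, subset_closure (hNW hx)⟩).resolve_right
      (disjoint_right.1 hD₁N hx))
  have hBD : (B : Set X) ⊆ D₀ ∪ (D₁ ∪ Wᶜ) := fun x hx ↦ by
    by_cases hxW : x ∈ W
    · exact (hD.ge ⟨hx, subset_closure hxW⟩).imp_right .inl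
    · exact .inr (.inr hxW)
  obtain ⟨a, ha⟩ := N.nonempty
  obtain ⟨x, -, hx₀, hx₁⟩ := isPreconnected_closed_iff.1 B.isConnected.isPreconnected D₀ (D₁ ∪ Wᶜ)
    hD₀ (hD₁.union hW.isClosed_compl) hBD ⟨a, hNB.le ha, hND₀ ha⟩
    ⟨b, hbB, .inr fun hb ↦ (hWU (subset_closure hb)).2 rfl⟩
  exact hx₁.elim (disjoint_left.1 hD₀₁ hx₀) (disjoint_left.1 hD₀W hx₀)

lemma exists_le_maximal_of_isCompact {α : Type*} [Preorder α] [TopologicalSpace α]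
    [ClosedIciTopology α] {S : Set α} (hS : IsCompact S) {a : α} (ha : a ∈ S) :
    ∃ m, a ≤ m ∧ Maximal (· ∈ S) m := by
  refine zorn_le_nonempty₀ S (fun c hcS hc y hy ↦ ?_) a ha
  obtain ⟨m, hmS, hm⟩ := hS.inter_iInter_nonempty (fun b : c ↦ Ici (b : α))
    (fun _ ↦ isClosed_Ici) fun t ↦ by
      obtain ⟨z, hz, hzt⟩ : ∃ z ∈ c, ∀ b ∈ t, (b : α) ≤ z := by
        obtain ⟨z, hz⟩ := hc.directedOn.directed_val.finset_le (hι := ⟨⟨y, hy⟩⟩) t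
        exact ⟨z, z.2, hz⟩
      exact ⟨z, hcS hz, mem_iInter₂.2 hzt⟩
  exact ⟨m, hmS, fun b hb ↦ mem_iInter.1 hm ⟨b, hb⟩⟩

theorem exists_mem_Icc_eq {A B : Subcontinua X} (hAB : A ≤ B) {w : Subcontinua X → ℝ}
    (hw : Continuous w) {t : ℝ} (hA : w A ≤ t) (hB : t ≤ w B) : ∃ N ∈ Icc A B, w N = t := by
  have hS : IsCompact (Icc A B ∩ {N | w N ≤ t}) :=
    ((isClosed_Ici.inter isClosed_Iic).inter (isClosed_le hw continuous_const)).isCompact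
  obtain ⟨N, -, ⟨hN, hNt⟩, hmax⟩ := exists_le_maximal_of_isCompact hS ⟨left_mem_Icc.2 hAB, hA⟩
  refine ⟨N, hN, le_antisymm hNt <| not_lt.1 fun hlt ↦ ?_⟩
  have hNB : N < B := hN.2.lt_of_ne fun h ↦ (h ▸ hB).not_gt hlt
  obtain ⟨U, hU, hNU, hUw⟩ :=
    exists_isOpen_forall_mem_of_mem_nhds ((isOpen_lt hw continuous_const).mem_nhds hlt)
  obtain ⟨C, hNC, hCB, hCU⟩ := exists_lt_le_subset_of_lt hNB hU hNU
  have hwC : w C < t := hUw C hNC.le hCU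
  exact hNC.not_ge (hmax ⟨⟨hN.1.trans hNC.le, hCB⟩, hwC.le⟩ hNC.le)

end Continua

/-! ### Crooked functions -/

section Crooked

open Subcontinua

variable {X : Type*} [TopologicalSpace X]

/-- The zero set of `Φ` is crooked with respect to `u`: two connected subsets of it, one going from
`0` down to `-1` in the sense of `u` and the other going from `0` up to `1`, do not meet. -/
def CrookedAt (Φ u : C(X, ℝ)) : Prop :=
  ∀ ⦃P R : Set X⦄, IsPreconnected P → IsPreconnected R → (∀ q ∈ P, Φ q = 0) → (∀ q ∈ R, Φ q = 0) →
    (∀ q ∈ P, u q ≤ 0) → (∀ q ∈ R, 0 ≤ u q) → (∃ a ∈ P, u a = -1) → (∃ b ∈ R, u b = 1) →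
    Disjoint P R

/-- The cubic `y ^ 3 - 3 * y` folds the line over `[-2, 2]`; its zero set over a path of `u` from
`-1` to `1` has to pass through all three sheets. -/
def cubicFold (y u : C(X, ℝ)) : C(X, ℝ) :=
  y ^ 3 - (3 : ℝ) • y - (3 : ℝ) • u

lemma cubicFold_apply (y u : C(X, ℝ)) (q : X) : cubicFold y u q = y q ^ 3 - 3 * y q - 3 * u q := by
  simp [cubicFold]

lemma cubicFold_neg (y u : C(X, ℝ)) (q : X) : cubicFold (-y) (-u) q = -cubicFold y u q := by
  simp only [cubicFold_apply, ContinuousMap.neg_apply]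
  ring

lemma half_lt_cubicFold {y u : C(X, ℝ)} {q : X} (hu : u q ≤ 1) (hy : 3 < y q) :
    1 / 2 < cubicFold y u q := by
  rw [cubicFold_apply]
  nlinarith [mul_pos (sub_pos.2 hy) (sub_pos.2 hy)]

lemma cubicFold_lt_neg_half {y u : C(X, ℝ)} {q : X} (hu : -1 ≤ u q) (hy : y q < -3) :
    cubicFold y u q < -(1 / 2) := by
  rw [← neg_lt_neg_iff, neg_neg, ← cubicFold_neg]
  exact half_lt_cubicFold (neg_le.1 hu) (lt_neg.1 hy)

lemma lt_neg_one_of_cubicFold_le_half {y u : C(X, ℝ)} {P : Set X} (hP : IsPreconnected P)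
    (hfold : ∀ q ∈ P, cubicFold y u q ≤ 1 / 2) (hu : ∀ q ∈ P, u q ≤ 0) (ha : ∃ a ∈ P, u a = -1)
    {q : X} (hq : q ∈ P) : y q < -1 := by
  simp only [cubicFold_apply] at hfold
  obtain ⟨a, haP, ha⟩ := ha
  have hya : y a < -1 := by
    by_contra! hya
    nlinarith [hfold a haP, mul_nonneg (by linarith : 0 ≤ y a + 2) (sq_nonneg (y a - 1))]
  by_contra! hyq
  obtain ⟨z, hzP, hz⟩ := hP.intermediate_value haP hq y.continuous.continuousOn ⟨hya.le, hyq⟩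
  have := hfold z hzP
  rw [hz] at this
  linarith [hu z hzP]

lemma crookedAt_of_abs_cubicFold_le_half {Φ y u : C(X, ℝ)}
    (h : ∀ q, Φ q = 0 → |cubicFold y u q| ≤ 1 / 2) : CrookedAt Φ u := by
  intro P R hP hR hΦP hΦR huP huR ha hb
  refine disjoint_left.2 fun q hqP hqR ↦ ?_
  have hyP : y q < -1 :=
    lt_neg_one_of_cubicFold_le_half hP (fun q hq ↦ (abs_le.1 (h q (hΦP q hq))).2) huP ha hqP
  have hyR : (-y) q < -1 := by
    refine lt_neg_one_of_cubicFold_le_half (u := -u) hR (fun q hq ↦ ?_) (fun q hq ↦ ?_) ?_ hqR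
    · rw [cubicFold_neg]
      exact neg_le.1 (abs_le.1 (h q (hΦR q hq))).1
    · exact neg_nonpos.2 (huR q hq)
    · exact hb.imp fun b ↦ And.imp_right (congrArg Neg.neg)
  rw [ContinuousMap.neg_apply] at hyR
  linarith

lemma exists_forall_crookedAt {κ : Type*} [Finite κ] {u : κ → C(X, ℝ)} (hu : ∀ i q, |u i q| ≤ 1)
    (F : C(X, ℝ)) : ∃ Φ : C(X, ℝ), (∀ q, 1 / 2 < F q → 1 / 2 < Φ q) ∧
      (∀ q, F q < -(1 / 2) → Φ q < -(1 / 2)) ∧ ∀ i, CrookedAt Φ (u i) := by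
  have := Fintype.ofFinite κ
  suffices ∀ s : Finset κ, ∀ F : C(X, ℝ), ∃ Φ : C(X, ℝ), (∀ q, 1 / 2 < F q → 1 / 2 < Φ q) ∧
      (∀ q, F q < -(1 / 2) → Φ q < -(1 / 2)) ∧ ∀ i ∈ s, CrookedAt Φ (u i) by
    simpa using this Finset.univ F
  intro s
  induction s using Finset.cons_induction with
  | empty => exact fun F ↦ ⟨F, fun _ ↦ id, fun _ ↦ id, by simp⟩
  | cons i s _ ih =>
    intro F
    obtain ⟨Φ, hpos, hneg, hΦ⟩ := ih (cubicFold ((6 : ℝ) • F) (u i))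
    have hF (q) : ((6 : ℝ) • F) q = 6 * F q := by simp
    refine ⟨Φ, fun q hq ↦ hpos q (half_lt_cubicFold (abs_le.1 (hu i q)).2 (by linarith [hF q])),
      fun q hq ↦ hneg q (cubicFold_lt_neg_half (abs_le.1 (hu i q)).1 (by linarith [hF q])),
      (Finset.forall_mem_cons _ _).2 ⟨?_, hΦ⟩⟩
    refine crookedAt_of_abs_cubicFold_le_half (y := (6 : ℝ) • F) fun q hq ↦ abs_le.2 ⟨?_, ?_⟩
    · by_contra! h
      linarith [hneg q h]
    · by_contra! h
      linarith [hpos q h]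

lemma exists_finite_steps {ξ : ℝ} (hξ : 0 < ξ) : ∃ (N : ℕ) (σ : Fin N → C(ℝ, ℝ)),
    (∀ k x, σ k x ∈ Icc (0 : ℝ) 1) ∧ ∀ s t, 0 ≤ s → t ≤ 1 → s + ξ < t →
      ∃ k, (∀ x ≤ s, σ k x = 0) ∧ ∀ x ≥ t, σ k x = 1 := by
  obtain ⟨N, hN⟩ := exists_nat_gt (2 / ξ)
  have N_pos : (0 : ℝ) < N := (by positivity : 0 < 2 / ξ).trans hN
  have two_lt : 2 < N * ξ := (div_lt_iff₀ hξ).1 hN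
  refine ⟨N + 1, fun k ↦ ⟨fun x ↦ projIcc (0 : ℝ) 1 zero_le_one (N * x - k), by fun_prop⟩,
    fun k x ↦ Subtype.coe_prop _, fun s t hs ht hst ↦ ?_⟩
  have ceil_lt := Nat.ceil_lt_add_one (mul_nonneg N_pos.le hs)
  refine ⟨⟨⌈N * s⌉₊, Nat.lt_succ_of_le (Nat.ceil_le.2 (by nlinarith))⟩,
    fun x hx ↦ ?_, fun x hx ↦ ?_⟩
  · have : (N : ℝ) * x - ⌈N * s⌉₊ ≤ 0 := by nlinarith [Nat.le_ceil (N * s)]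
    exact congrArg Subtype.val (projIcc_of_le_left zero_le_one this)
  · have : 1 ≤ (N : ℝ) * x - ⌈N * s⌉₊ := by nlinarith
    exact congrArg Subtype.val (projIcc_of_right_le zero_le_one this)

/-- As far as the maxima of the functions `h j` can tell, one of `A` and `B` is up to an error `ξ`
contained in the other. -/
def ApproxComparable {ι : Type*} (h : ι → C(X, ℝ)) (ξ : ℝ) (A B : Subcontinua X) : Prop :=
  (∀ j, supOn (h j) A ≤ supOn (h j) B + ξ) ∨ ∀ j, supOn (h j) B ≤ supOn (h j) A + ξ

theorem exists_forall_approxComparable [CompactSpace X] {ι : Type*} [Finite ι] {h : ι → C(X, ℝ)}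
    (hh : ∀ j q, h j q ∈ Icc (0 : ℝ) 1) {ξ : ℝ} (hξ : 0 < ξ) (F : C(X, ℝ)) :
    ∃ Φ : C(X, ℝ), (∀ q, 1 / 2 < F q → 1 / 2 < Φ q) ∧ (∀ q, F q < -(1 / 2) → Φ q < -(1 / 2)) ∧
      ∀ A B : Subcontinua X, (∀ q ∈ A, Φ q = 0) → (∀ q ∈ B, Φ q = 0) →
        ((A : Set X) ∩ B).Nonempty → ApproxComparable h ξ A B := by
  obtain ⟨N, σ, hσ, hstep⟩ := exists_finite_steps hξ
  let u (i : (ι × ι) × Fin N × Fin N) : C(X, ℝ) :=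
    (σ i.2.2).comp (h i.1.2) - (σ i.2.1).comp (h i.1.1)
  have abs_u_le (i q) : |u i q| ≤ 1 := Real.dist_le_of_mem_Icc_01 (hσ _ _) (hσ _ _)
  obtain ⟨Φ, hpos, hneg, hΦ⟩ := exists_forall_crookedAt abs_u_le F
  refine ⟨Φ, hpos, hneg, fun A B hA hB hAB ↦ ?_⟩
  by_contra! hcomp
  simp only [ApproxComparable] at hcomp
  push Not at hcomp
  obtain ⟨⟨a, ha⟩, b, hb⟩ := hcomp
  obtain ⟨k, hk₀, hk₁⟩ := hstep _ _ (supOn_mem_Icc (hh a)).1 (supOn_mem_Icc (hh a)).2 ha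
  obtain ⟨l, hl₀, hl₁⟩ := hstep _ _ (supOn_mem_Icc (hh b)).1 (supOn_mem_Icc (hh b)).2 hb
  have u_on_A (q) (hq : q ∈ A) : u ((a, b), k, l) q = -σ k (h a q) := by
    simp [u, hl₀ _ (le_supOn hq)]
  have u_on_B (q) (hq : q ∈ B) : u ((a, b), k, l) q = σ l (h b q) := by
    simp [u, hk₀ _ (le_supOn hq)]
  refine not_disjoint_iff_nonempty_inter.2 hAB <| hΦ ((a, b), k, l) A.isConnected.isPreconnected
    B.isConnected.isPreconnected hA hB (fun q hq ↦ ?_) (fun q hq ↦ ?_) ?_ ?_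
  · exact u_on_A q hq ▸ neg_nonpos.2 (hσ _ _).1
  · exact u_on_B q hq ▸ (hσ _ _).1
  · obtain ⟨x, hx, hxA⟩ := exists_eq_supOn (h a) A
    exact ⟨x, hx, by rw [u_on_A x hx, hk₁ _ hxA.ge]⟩
  · obtain ⟨x, hx, hxB⟩ := exists_eq_supOn (h b) B
    exact ⟨x, hx, by rw [u_on_B x hx, hl₁ _ hxB.ge]⟩

end Crooked

/-! ### A weight on the hyperspace -/

section Weight

open Subcontinua

variable {X ι : Type*} [TopologicalSpace X]

lemma exists_supOn_eq_one_and_eq_zero [NormalSpace X] [T1Space X] {A B : Subcontinua X}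
    (hAB : ¬A ≤ B) : ∃ h : C(X, ℝ), (∀ x, h x ∈ Icc (0 : ℝ) 1) ∧ supOn h A = 1 ∧ supOn h B = 0 := by
  obtain ⟨x, hxA, hxB⟩ := not_subset.1 hAB
  obtain ⟨h, hhB, hhx, hh⟩ := exists_continuous_zero_one_of_isClosed B.isClosed isClosed_singleton
    (disjoint_singleton_right.2 hxB)
  refine ⟨h, hh, IsGreatest.csSup_eq ⟨⟨x, hxA, hhx rfl⟩, ?_⟩, ?_⟩
  · exact forall_mem_image.2 fun y _ ↦ (hh y).2
  · rw [supOn, image_congr hhB, Pi.zero_def, B.nonempty.image_const, csSup_singleton]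

theorem exists_finset_forall_abs_supOn_sub [CompactSpace X] [T2Space X]
    {𝒦 : Set (Subcontinua X × Subcontinua X)} (h𝒦 : IsClosed 𝒦) (hne : ∀ p ∈ 𝒦, p.1 ≠ p.2) :
    ∃ t : Finset C(X, ℝ), (∀ h ∈ t, ∀ x, h x ∈ Icc (0 : ℝ) 1) ∧
      ∀ p ∈ 𝒦, ∃ h ∈ t, 1 / 2 < |supOn h p.1 - supOn h p.2| := by
  obtain ⟨t, ht, htfin, hcover⟩ := h𝒦.isCompact.elim_finite_subcover_image
    (b := {h : C(X, ℝ) | ∀ x, h x ∈ Icc (0 : ℝ) 1})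
    (c := fun h ↦ {p | 1 / 2 < |supOn h p.1 - supOn h p.2|})
    (fun h _ ↦ isOpen_lt continuous_const
      ((continuous_supOn.comp continuous_fst).sub (continuous_supOn.comp continuous_snd)).abs)
    fun p hp ↦ by
      simp only [mem_iUnion, exists_prop]
      by_cases h : p.1 ≤ p.2
      · have hp' : ¬p.2 ≤ p.1 := fun hp' ↦ hne p hp (h.antisymm hp')
        obtain ⟨h, hh, h₁, h₀⟩ := exists_supOn_eq_one_and_eq_zero hp'
        exact ⟨h, hh, by norm_num [h₁, h₀]⟩
      · obtain ⟨h, hh, h₁, h₀⟩ := exists_supOn_eq_one_and_eq_zero h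
        exact ⟨h, hh, by norm_num [h₁, h₀]⟩
  refine ⟨htfin.toFinset, fun h hh ↦ ht (htfin.mem_toFinset.1 hh), fun p hp ↦ ?_⟩
  simpa only [mem_iUnion, exists_prop, htfin.mem_toFinset, mem_ofPred_eq] using hcover hp

/-- The functions `g` and `1 - g`, whose maxima give the range of `g`, and the functions `k j`. -/
def weightTest (g : C(X, ℝ)) (k : ι → C(X, ℝ)) (j : Option (Option ι)) : C(X, ℝ) :=
  j.elim g fun j ↦ j.elim (1 - g) k

lemma weightTest_mem_Icc {g : C(X, ℝ)} {k : ι → C(X, ℝ)} (hg : ∀ x, g x ∈ Icc (0 : ℝ) 1)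
    (hk : ∀ j x, k j x ∈ Icc (0 : ℝ) 1) : ∀ j x, weightTest g k j x ∈ Icc (0 : ℝ) 1
  | none, x => hg x
  | some none, x => Icc.mem_iff_one_sub_mem.1 (hg x)
  | some (some j), x => hk j x

variable [Fintype ι]

lemma mul_sub_add_le_of_sum_mul_eq {c a b : ι → ℝ} {η : ℝ} (hc : ∀ j, 0 ≤ c j)
    (hsum : ∑ j, c j * a j = ∑ j, c j * b j) (hab : ∀ j, a j ≤ b j + η) (j : ι) :
    c j * (b j - a j + η) ≤ (∑ i, c i) * η :=
  calc c j * (b j - a j + η) ≤ ∑ i, c i * (b i - a i + η) :=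
        Finset.single_le_sum (f := fun i ↦ c i * (b i - a i + η))
          (fun i _ ↦ mul_nonneg (hc i) (by linarith [hab i])) (Finset.mem_univ j)
    _ = (∑ i, c i) * η := by
        simp only [mul_add, mul_sub, Finset.sum_add_distrib, Finset.sum_sub_distrib, hsum, sub_self,
          zero_add, Finset.sum_mul]

variable (ι) in
/-- The coefficient of the functions `k j` in the weight, so small that together they contribute at
most `1 / 10`. -/
noncomputable def smallCoeff : ℝ := 1 / (10 * (Fintype.card ι + 1))

/-- The coefficients of the functions `weightTest g k` in the weight. -/
noncomputable def weightCoeff (j : Option (Option ι)) : ℝ :=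
  j.elim 1 fun j ↦ j.elim 1 fun _ ↦ smallCoeff ι

/-- A Whitney-type weight of subcontinua. It measures the range of `g`, with a small perturbation
that makes it sensitive to each of the functions `k j`. -/
noncomputable def weight (g : C(X, ℝ)) (k : ι → C(X, ℝ)) (A : Subcontinua X) : ℝ :=
  ∑ j, weightCoeff j * supOn (weightTest g k j) A

variable (ι) in
lemma smallCoeff_pos : 0 < smallCoeff ι := by
  unfold smallCoeff
  positivity

variable (ι) in
lemma smallCoeff_mul_card_add_one : smallCoeff ι * (Fintype.card ι + 1) = 1 / 10 := by
  unfold smallCoeff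
  field_simp

variable (ι) in
lemma smallCoeff_le : smallCoeff ι ≤ 1 / 10 := by
  nlinarith [smallCoeff_mul_card_add_one ι, smallCoeff_pos ι, (Fintype.card ι).cast_nonneg (α := ℝ)]

lemma smallCoeff_le_weightCoeff : ∀ j : Option (Option ι), smallCoeff ι ≤ weightCoeff j
  | none | some none => (smallCoeff_le ι).trans (by norm_num : (1 / 10 : ℝ) ≤ 1)
  | some (some _) => le_rfl

lemma sum_weightCoeff_mul (a : Option (Option ι) → ℝ) : ∑ j, weightCoeff j * a j =
    a none + a (some none) + smallCoeff ι * ∑ j, a (some (some j)) := by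
  simp only [Fintype.sum_option, weightCoeff, Option.elim, one_mul, Finset.mul_sum, add_assoc]

lemma smallCoeff_mul_sum_mem_Icc {a : ι → ℝ} (ha : ∀ j, a j ∈ Icc (0 : ℝ) 1) :
    smallCoeff ι * ∑ j, a j ∈ Icc (0 : ℝ) (1 / 10) := by
  have sum_le : ∑ j, a j ≤ Fintype.card ι + 1 :=
    (Finset.sum_le_card_nsmul _ _ 1 fun j _ ↦ (ha j).2).trans (by simp)
  exact ⟨mul_nonneg (smallCoeff_pos ι).le (Finset.sum_nonneg fun j _ ↦ (ha j).1),
    (mul_le_mul_of_nonneg_left sum_le (smallCoeff_pos ι).le).trans_eq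
      (smallCoeff_mul_card_add_one ι)⟩

lemma sum_weightCoeff_le : ∑ j : Option (Option ι), weightCoeff j ≤ 3 := by
  have := sum_weightCoeff_mul fun _ : Option (Option ι) ↦ 1
  have := (smallCoeff_mul_sum_mem_Icc fun _ : ι ↦ right_mem_Icc.2 zero_le_one).2
  simp only [mul_one] at *
  linarith

lemma weight_eq (g : C(X, ℝ)) (k : ι → C(X, ℝ)) (A : Subcontinua X) : weight g k A =
    supOn g A + supOn (1 - g) A + smallCoeff ι * ∑ j, supOn (k j) A :=
  sum_weightCoeff_mul _

variable {g : C(X, ℝ)} {k : ι → C(X, ℝ)} {A B : Subcontinua X}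

theorem abs_supOn_sub_le_of_approxComparable (hAB : weight g k A = weight g k B)
    (h : ApproxComparable (weightTest g k) (smallCoeff ι / 10) A B) (j : ι) :
    |supOn (k j) A - supOn (k j) B| ≤ 1 / 2 := by
  wlog hle : ∀ j, supOn (weightTest g k j) A ≤ supOn (weightTest g k j) B + smallCoeff ι / 10
      generalizing A B
  · rw [abs_sub_comm]
    exact this hAB.symm h.symm (h.resolve_left hle)
  have hε := smallCoeff_pos ι
  have hj : smallCoeff ι * (supOn (k j) B - supOn (k j) A + smallCoeff ι / 10) ≤
      smallCoeff ι * (3 / 10) :=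
    calc _ ≤ (∑ i : Option (Option ι), weightCoeff i) * (smallCoeff ι / 10) :=
          mul_sub_add_le_of_sum_mul_eq (fun i ↦ hε.le.trans (smallCoeff_le_weightCoeff i)) hAB hle
            (some (some j))
      _ ≤ 3 * (smallCoeff ι / 10) := by gcongr; exact sum_weightCoeff_le
      _ = smallCoeff ι * (3 / 10) := by ring
  have hBA := le_of_mul_le_mul_left hj hε
  have hAB : supOn (k j) A ≤ supOn (k j) B + smallCoeff ι / 10 := hle (some (some j))
  exact abs_sub_le_iff.2 ⟨by linarith [smallCoeff_le ι], by linarith⟩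

variable [CompactSpace X]

lemma continuous_weight : Continuous (weight g k) :=
  continuous_finsetSum _ fun _ _ ↦ continuous_supOn.const_mul _

lemma weight_sub_mem_Icc (hk : ∀ j x, k j x ∈ Icc (0 : ℝ) 1) (A : Subcontinua X) :
    weight g k A - (supOn g A + supOn (1 - g) A) ∈ Icc (0 : ℝ) (1 / 10) := by
  rw [weight_eq, add_sub_cancel_left]
  exact smallCoeff_mul_sum_mem_Icc fun j ↦ supOn_mem_Icc (hk j)

theorem weight_le_two_of_subsingleton (hk : ∀ j x, k j x ∈ Icc (0 : ℝ) 1)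
    (hA : (A : Set X).Subsingleton) : weight g k A ≤ 2 := by
  obtain ⟨x, hx, hxg⟩ := exists_eq_supOn g A
  obtain ⟨y, hy, hyg⟩ := exists_eq_supOn (1 - g) A
  have : supOn g A + supOn (1 - g) A = 1 := by simp [← hxg, ← hyg, hA hx hy]
  linarith [(weight_sub_mem_Icc (g := g) hk A).2]

theorem two_le_weight (hk : ∀ j x, k j x ∈ Icc (0 : ℝ) 1) {a b : X} (ha : a ∈ A) (hb : b ∈ A)
    (hga : g a = 0) (hgb : g b = 1) : 2 ≤ weight g k A := by
  have hb : g b ≤ supOn g A := le_supOn hb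
  have ha : (1 - g) a ≤ supOn (1 - g) A := le_supOn ha
  rw [ContinuousMap.sub_apply, ContinuousMap.one_apply] at ha
  linarith [(weight_sub_mem_Icc (g := g) hk A).1]

theorem Icc_subset_image_of_weight_eq_two (hg : ∀ x, g x ∈ Icc (0 : ℝ) 1)
    (hk : ∀ j x, k j x ∈ Icc (0 : ℝ) 1) (hA : weight g k A = 2) : Icc (1 / 5) (4 / 5) ⊆ g '' A := by
  obtain ⟨x, hx, hxg⟩ := exists_eq_supOn g A
  obtain ⟨y, hy, hyg⟩ := exists_eq_supOn (1 - g) A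
  have hyg : 1 - g y = supOn (1 - g) A := hyg
  have := (weight_sub_mem_Icc (g := g) hk A).2
  refine (Icc_subset_Icc ?_ ?_).trans
    (A.isConnected.isPreconnected.intermediate_value hy hx g.continuous.continuousOn)
  · linarith [(hg x).2]
  · linarith [(hg y).1]

end Weight

/-! ### Splitting families -/

section Splitting

open Subcontinua

variable {X ι : Type*} [TopologicalSpace X]

theorem exists_continuous_ne_half [CompactSpace X] [T2Space X] {Y E₀ E₁ : Set X} (hY : IsClosed Y)
    (hE₀ : IsClosed E₀) (hE₁ : IsClosed E₁) (hE : Disjoint E₀ E₁)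
    (h : ∀ A : Subcontinua X, (A : Set X) ⊆ Y → Disjoint (A : Set X) E₀ ∨ Disjoint (A : Set X) E₁) :
    ∃ γ : C(X, ℝ), EqOn γ 0 E₀ ∧ EqOn γ 1 E₁ ∧ ∀ x ∈ Y, γ x ≠ 1 / 2 := by
  obtain ⟨D₀, D₁, hD₀, hD₁, hD, hD₀₁, hD₀E₁, hD₁E₀⟩ :=
    exists_isClosed_partition_of_forall_disjoint hY hE₀ hE₁ h
  obtain ⟨γ, hγ₀, hγ₁, -⟩ := exists_continuous_zero_one_of_isClosed
    (hD₀.union hE₀) (hD₁.union hE₁) <| disjoint_union_left.2 ⟨disjoint_union_right.2 ⟨hD₀₁, hD₀E₁⟩,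
      disjoint_union_right.2 ⟨hD₁E₀.symm, hE⟩⟩
  refine ⟨γ, hγ₀.mono subset_union_right, hγ₁.mono subset_union_right, fun x hx ↦ ?_⟩
  rcases hD.ge hx with hx | hx
  · norm_num [hγ₀ (Or.inl hx)]
  · norm_num [hγ₁ (Or.inl hx)]

/-- Functions with values in the unit interval, no two of which are nonzero at the same point. -/
structure DisjointBumps (ρ : ι → C(X, ℝ)) : Prop where
  mem_Icc : ∀ i x, ρ i x ∈ Icc (0 : ℝ) 1
  eq_zero_or : ∀ ⦃i j⦄, i ≠ j → ∀ x, ρ i x = 0 ∨ ρ j x = 0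

/-- Two functions from which the members of a cover `U 0, U 1, U 2` can be told apart: off each of
them, the point `(f x, g x)` of `[-2, 2] × [0, 1]` lies on or near a specified side. -/
structure IsCoordinates (U : Fin 3 → Set X) (f g : C(X, ℝ)) : Prop where
  mem_Icc : ∀ x, g x ∈ Icc (0 : ℝ) 1
  off₀ : ∀ x ∉ U 0, f x = -2
  off₁ : ∀ x ∉ U 1, 3 / 2 < f x ∨ g x = 0
  off₂ : ∀ x ∉ U 2, 3 / 2 < f x ∨ g x = 1

/-- Finitely many triples of closed families of subcontinua, jointly exhausting the hyperspace. The
members of `K i 0` and `K i 1` dip below, respectively rise above, the level of `f` near `0` under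
the `i`-th bump, and no member of `K i 2` crosses the middle part of the range of `g`. -/
structure SplitFamily (f g : C(X, ℝ)) (ρ : ι → C(X, ℝ)) (K : ι → Fin 3 → Set (Subcontinua X)) :
    Prop where
  isClosed : ∀ i j, IsClosed (K i j)
  disjoint : ∀ i, Disjoint (K i 0) (K i 1)
  exists_mem : ∀ B, ∃ i j, B ∈ K i j
  low : ∀ i, ∀ B ∈ K i 0, ∃ x ∈ B, 9 / 10 < ρ i x ∧ f x < 1 / 4
  high : ∀ i, ∀ B ∈ K i 1, ∃ x ∈ B, 9 / 10 < ρ i x ∧ -(1 / 4) < f x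
  avoid : ∀ i, ∀ B ∈ K i 2, ¬Icc (1 / 5) (4 / 5) ⊆ g '' B

variable {n : ℕ} {f g : C(X, ℝ)} {ρ : Fin n → C(X, ℝ)} {K : Fin n → Fin 3 → Set (Subcontinua X)}

/-- The function `f` on `X × [0, 1] ^ n`, shifted under the `i`-th bump by an amount between `-1`
and `1` that is read off from the `i`-th coordinate of the cube. -/
def tilt (f : C(X, ℝ)) (ρ : Fin n → C(X, ℝ)) : C(X × UnitCube n, ℝ) where
  toFun q := f q.1 - ∑ i, ρ i q.1 * (2 * (q.2 i : ℝ) - 1)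
  continuous_toFun := by fun_prop

lemma DisjointBumps.tilt_eq (hρ : DisjointBumps ρ) {q : X × UnitCube n} {i : Fin n}
    (hi : ρ i q.1 ≠ 0) : tilt f ρ q = f q.1 - ρ i q.1 * (2 * (q.2 i : ℝ) - 1) := by
  refine congrArg (f q.1 - ·) (Finset.sum_eq_single i (fun j _ hj ↦ ?_) (by simp))
  rw [(hρ.eq_zero_or hj q.1).resolve_right hi, zero_mul]

lemma DisjointBumps.abs_tilt_sub_le_one (hρ : DisjointBumps ρ) (q : X × UnitCube n) :
    |tilt f ρ q - f q.1| ≤ 1 := by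
  by_cases h : ∃ i, ρ i q.1 ≠ 0
  · obtain ⟨i, hi⟩ := h
    have hcube : |2 * (q.2 i : ℝ) - 1| ≤ 1 :=
      abs_le.2 ⟨by linarith [(q.2 i).2.1], by linarith [(q.2 i).2.2]⟩
    rw [hρ.tilt_eq hi, sub_sub_cancel_left, abs_neg, abs_mul, abs_of_nonneg (hρ.mem_Icc i q.1).1]
    exact mul_le_one₀ (hρ.mem_Icc i q.1).2 (abs_nonneg _) hcube
  · push Not at h
    simp [tilt, h]

lemma DisjointBumps.cube_le_of_low (hρ : DisjointBumps ρ) {q : X × UnitCube n} {i : Fin n}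
    (htilt : -(1 / 20) ≤ tilt f ρ q) (hi : 9 / 10 < ρ i q.1) (hf : f q.1 < 1 / 4) :
    (q.2 i : ℝ) ≤ 3 / 4 := by
  rw [hρ.tilt_eq (by linarith)] at htilt
  by_contra! h
  nlinarith

lemma DisjointBumps.le_cube_of_high (hρ : DisjointBumps ρ) {q : X × UnitCube n} {i : Fin n}
    (htilt : tilt f ρ q ≤ 1 / 20) (hi : 9 / 10 < ρ i q.1) (hf : -(1 / 4) < f q.1) :
    1 / 4 ≤ (q.2 i : ℝ) := by
  rw [hρ.tilt_eq (by linarith)] at htilt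
  by_contra! h
  nlinarith

/-- The function `κ` vanishes on the lower `i`-th face of the cube and equals `1` on the upper one.
It also vanishes on `M₀` and equals `1` on `M₁`, except close to the opposite face. -/
structure IsCut (i : Fin n) (M₀ M₁ : Set (X × UnitCube n)) (κ : C(X × UnitCube n, ℝ)) : Prop where
  face₀ : ∀ q, q.2 i = 0 → κ q = 0
  face₁ : ∀ q, q.2 i = 1 → κ q = 1
  low : ∀ q ∈ M₀, (q.2 i : ℝ) ≤ 3 / 4 → κ q = 0
  high : ∀ q ∈ M₁, 1 / 4 ≤ (q.2 i : ℝ) → κ q = 1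

variable [CompactSpace X] [T2Space X]

lemma exists_isCut (i : Fin n) {M₀ M₁ : Set (X × UnitCube n)} (hM₀ : IsClosed M₀)
    (hM₁ : IsClosed M₁) (hM : Disjoint M₀ M₁) : ∃ κ, IsCut i M₀ M₁ κ := by
  have hi : Continuous fun q : X × UnitCube n ↦ (q.2 i : ℝ) := by fun_prop
  obtain ⟨κ, hκ₀, hκ₁, -⟩ := exists_continuous_zero_one_of_isClosed
    (s := {q | (q.2 i : ℝ) = 0} ∪ M₀ ∩ {q | (q.2 i : ℝ) ≤ 3 / 4})
    (t := {q | (q.2 i : ℝ) = 1} ∪ M₁ ∩ {q | 1 / 4 ≤ (q.2 i : ℝ)})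
    ((isClosed_eq hi continuous_const).union (hM₀.inter (isClosed_le hi continuous_const)))
    ((isClosed_eq hi continuous_const).union (hM₁.inter (isClosed_le continuous_const hi))) <| by
      refine disjoint_left.2 ?_
      rintro q (h₀ | ⟨h₀, h₀'⟩) (h₁ | ⟨h₁, h₁'⟩) <;> simp only [mem_ofPred_eq] at *
      · linarith
      · linarith
      · linarith
      · exact disjoint_left.1 hM h₀ h₁
  exact ⟨κ, fun q hq ↦ hκ₀ (.inl (congrArg Subtype.val hq)),
    fun q hq ↦ hκ₁ (.inl (congrArg Subtype.val hq)), fun q hq hqi ↦ hκ₀ (.inr ⟨hq, hqi⟩),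
    fun q hq hqi ↦ hκ₁ (.inr ⟨hq, hqi⟩)⟩

variable (Φ : C(X × UnitCube n, ℝ)) (w : Subcontinua X → ℝ)

/-- The union of the continua in the zero set of `Φ` whose projections to `X` belong to `𝒦` and have
weight `2`. -/
def levelSet (𝒦 : Set (Subcontinua X)) : Set (X × UnitCube n) :=
  ⋃ A ∈ {A : Subcontinua (X × UnitCube n) | (A : Set (X × UnitCube n)) ⊆ {q | Φ q = 0}} ∩
    map .fst ⁻¹' ({A | w A = 2} ∩ 𝒦), (A : Set (X × UnitCube n))

variable {Φ w}

lemma mem_levelSet {𝒦 : Set (Subcontinua X)} {q : X × UnitCube n} : q ∈ levelSet Φ w 𝒦 ↔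
    ∃ A : Subcontinua (X × UnitCube n), (∀ q ∈ A, Φ q = 0) ∧ w (map .fst A) = 2 ∧ map .fst A ∈ 𝒦 ∧
      q ∈ A := by
  simp only [levelSet, mem_iUnion₂, exists_prop, mem_inter_iff, mem_preimage, mem_ofPred_eq,
    and_assoc]
  rfl

lemma isClosed_levelSet (hw : Continuous w) {𝒦 : Set (Subcontinua X)} (h𝒦 : IsClosed 𝒦) :
    IsClosed (levelSet Φ w 𝒦) :=
  isClosed_biUnion_coe <|
    (isClosed_setOf_subset (isClosed_eq Φ.continuous continuous_const)).inter <|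
      ((isClosed_eq hw continuous_const).inter h𝒦).preimage (continuous_map _)

variable [Fintype ι] {k : ι → C(X, ℝ)}

/-- `Φ` has the sign of `tilt f ρ` where the latter is not small, and its zero set is crooked: the
projections of intersecting continua in it are comparable, as far as the weight can tell. -/
structure IsCrookedTilt (f g : C(X, ℝ)) (ρ : Fin n → C(X, ℝ)) (k : ι → C(X, ℝ))
    (Φ : C(X × UnitCube n, ℝ)) : Prop where
  pos : ∀ q, 1 / 20 < tilt f ρ q → 0 < Φ q
  neg : ∀ q, tilt f ρ q < -(1 / 20) → Φ q < 0
  approxComparable : ∀ A B : Subcontinua (X × UnitCube n), (∀ q ∈ A, Φ q = 0) → (∀ q ∈ B, Φ q = 0) →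
    ((A : Set (X × UnitCube n)) ∩ B).Nonempty →
      ApproxComparable (weightTest g k) (smallCoeff ι / 10) (map .fst A) (map .fst B)

lemma exists_isCrookedTilt (f : C(X, ℝ)) (ρ : Fin n → C(X, ℝ)) (hg : ∀ x, g x ∈ Icc (0 : ℝ) 1)
    (hk : ∀ j x, k j x ∈ Icc (0 : ℝ) 1) : ∃ Φ, IsCrookedTilt f g ρ k Φ := by
  obtain ⟨Φ, hpos, hneg, hΦ⟩ := exists_forall_approxComparable
    (h := fun j ↦ (weightTest g k j).comp (.fst : C(X × UnitCube n, X)))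
    (fun j q ↦ weightTest_mem_Icc hg hk j q.1)
    (div_pos (smallCoeff_pos ι) (by norm_num : (0 : ℝ) < 10))
    ((10 : ℝ) • tilt f ρ)
  have hF (q) : ((10 : ℝ) • tilt f ρ) q = 10 * tilt f ρ q := rfl
  refine ⟨Φ, fun q hq ↦ ?_, fun q hq ↦ ?_, fun A B hA hB hAB ↦ ?_⟩
  · linarith [hpos q (by linarith [hF q])]
  · linarith [hneg q (by linarith [hF q])]
  · simpa only [ApproxComparable, supOn_map] using hΦ A B hA hB hAB

lemma IsCrookedTilt.abs_tilt_le (hΦ : IsCrookedTilt f g ρ k Φ) {q : X × UnitCube n} (hq : Φ q = 0) :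
    |tilt f ρ q| ≤ 1 / 20 :=
  abs_le.2 ⟨not_lt.1 fun h ↦ (hΦ.neg q h).ne hq, not_lt.1 fun h ↦ (hΦ.pos q h).ne' hq⟩

lemma IsCrookedTilt.disjoint_levelSet (hΦ : IsCrookedTilt f g ρ k Φ)
    {𝒦₀ 𝒦₁ : Set (Subcontinua X)}
    (hsep : ∀ A ∈ 𝒦₀, ∀ B ∈ 𝒦₁, ∃ j, 1 / 2 < |supOn (k j) A - supOn (k j) B|) :
    Disjoint (levelSet Φ (weight g k) 𝒦₀) (levelSet Φ (weight g k) 𝒦₁) := by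
  refine disjoint_left.2 fun q h₀ h₁ ↦ ?_
  obtain ⟨A, hA, hwA, hA𝒦, hqA⟩ := mem_levelSet.1 h₀
  obtain ⟨B, hB, hwB, hB𝒦, hqB⟩ := mem_levelSet.1 h₁
  obtain ⟨j, hj⟩ := hsep _ hA𝒦 _ hB𝒦
  exact hj.not_ge <| abs_supOn_sub_le_of_approxComparable (hwA.trans hwB.symm)
    (hΦ.approxComparable A B hA hB ⟨q, hqA, hqB⟩) j

lemma exists_le_weight_map_fst_eq_two (hk : ∀ j x, k j x ∈ Icc (0 : ℝ) 1)
    {A : Subcontinua (X × UnitCube n)} {a b : X × UnitCube n} (ha : a ∈ A) (hb : b ∈ A)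
    (hga : g a.1 = 0) (hgb : g b.1 = 1) : ∃ N ≤ A, weight g k (map .fst N) = 2 := by
  let P : Subcontinua (X × UnitCube n) := ⟨{a}, isClosed_singleton, isConnected_singleton⟩
  have hPA : P ≤ A := singleton_subset_iff.2 ha
  have hP : weight g k (map .fst P) ≤ 2 :=
    weight_le_two_of_subsingleton hk (subsingleton_singleton.image _)
  have hA : 2 ≤ weight g k (map .fst A) :=
    two_le_weight hk (mem_image_of_mem _ ha) (mem_image_of_mem _ hb) hga hgb
  obtain ⟨N, hN, hwN⟩ := exists_mem_Icc_eq hPA (continuous_weight.comp (continuous_map .fst)) hP hA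
  exact ⟨N, hN.2, hwN⟩

/-- A continuum crossing the range of `g` would contain one of weight `2`. The projection of the
latter lies in some `K i j`, which is impossible for each `j`. -/
lemma SplitFamily.disjoint_or_disjoint (hK : SplitFamily f g ρ K) (hρ : DisjointBumps ρ)
    (hg : ∀ x, g x ∈ Icc (0 : ℝ) 1) (hk : ∀ j x, k j x ∈ Icc (0 : ℝ) 1)
    (hΦ : IsCrookedTilt f g ρ k Φ) {κ : Fin n → C(X × UnitCube n, ℝ)}
    (hκ : ∀ i, IsCut i (levelSet Φ (weight g k) (K i 0)) (levelSet Φ (weight g k) (K i 1)) (κ i))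
    {A : Subcontinua (X × UnitCube n)}
    (hA : (A : Set (X × UnitCube n)) ⊆ {q | Φ q = 0 ∧ ∀ i, κ i q = 1 / 2}) :
    Disjoint (A : Set (X × UnitCube n)) {q | g q.1 = 0} ∨
      Disjoint (A : Set (X × UnitCube n)) {q | g q.1 = 1} := by
  rw [disjoint_left, disjoint_left]
  by_contra! h
  obtain ⟨⟨a, ha, hga⟩, b, hb, hgb⟩ := h
  obtain ⟨N, hNA, hN⟩ := exists_le_weight_map_fst_eq_two hk ha hb hga hgb
  have hNΦ (q) (hq : q ∈ N) : Φ q = 0 := (hA (hNA hq)).1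
  have hNκ (q) (hq : q ∈ N) (i) : κ i q = 1 / 2 := (hA (hNA hq)).2 i
  obtain ⟨i, j, hj⟩ := hK.exists_mem (map .fst N)
  match j with
  | 0 =>
    obtain ⟨_, ⟨q, hq, rfl⟩, hρq, hfq⟩ := hK.low i _ hj
    have hcube := hρ.cube_le_of_low (abs_le.1 (hΦ.abs_tilt_le (hNΦ q hq))).1 hρq hfq
    have := (hκ i).low q (mem_levelSet.2 ⟨N, hNΦ, hN, hj, hq⟩) hcube
    norm_num [hNκ q hq i] at this
  | 1 =>
    obtain ⟨_, ⟨q, hq, rfl⟩, hρq, hfq⟩ := hK.high i _ hj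
    have hcube := hρ.le_cube_of_high (abs_le.1 (hΦ.abs_tilt_le (hNΦ q hq))).2 hρq hfq
    have := (hκ i).high q (mem_levelSet.2 ⟨N, hNΦ, hN, hj, hq⟩) hcube
    norm_num [hNκ q hq i] at this
  | 2 => exact hK.avoid i _ hj (Icc_subset_image_of_weight_eq_two hg hk hN)

variable {U : Fin 3 → Set X}

lemma IsCrookedTilt.isSignedPair (hΦ : IsCrookedTilt f g ρ k Φ) (hρ : DisjointBumps ρ)
    (hfg : IsCoordinates U f g) {Γ : X × UnitCube n → ℝ} (hΓ₀ : ∀ q, g q.1 = 0 → Γ q < 0)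
    (hΓ₁ : ∀ q, g q.1 = 1 → 0 < Γ q) : UnitCube.IsSignedPair U Φ Γ where
  off₀ q hq := hΦ.neg q (by
    linarith [hfg.off₀ _ hq, (abs_le.1 (hρ.abs_tilt_sub_le_one (f := f) q)).2])
  off₁ q hq := (hfg.off₁ _ hq).imp (fun hf ↦ hΦ.pos q (by
    linarith [(abs_le.1 (hρ.abs_tilt_sub_le_one (f := f) q)).1])) (hΓ₀ q)
  off₂ q hq := (hfg.off₂ _ hq).imp (fun hf ↦ hΦ.pos q (by
    linarith [(abs_le.1 (hρ.abs_tilt_sub_le_one (f := f) q)).1])) (hΓ₁ q)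

theorem SplitFamily.hasThinShrinking (hK : SplitFamily f g ρ K) (hρ : DisjointBumps ρ)
    (hfg : IsCoordinates U f g) (hU : ∀ j, IsOpen (U j)) : HasThinShrinking U := by
  obtain ⟨t, ht, hsep⟩ := exists_finset_forall_abs_supOn_sub (𝒦 := ⋃ i, K i 0 ×ˢ K i 1)
    (isClosed_iUnion_of_finite fun i ↦ (hK.isClosed i 0).prod (hK.isClosed i 1)) fun p hp hp' ↦ by
      obtain ⟨i, h₀, h₁⟩ := mem_iUnion.1 hp
      exact disjoint_left.1 (hK.disjoint i) h₀ (hp' ▸ h₁)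
  let k (h : t) : C(X, ℝ) := h
  have hk (h : t) : ∀ x, k h x ∈ Icc (0 : ℝ) 1 := ht h h.2
  obtain ⟨Φ, hΦ⟩ := exists_isCrookedTilt (k := k) f ρ hfg.mem_Icc hk
  have hdisj (i) : Disjoint (levelSet Φ (weight g k) (K i 0)) (levelSet Φ (weight g k) (K i 1)) :=
    hΦ.disjoint_levelSet fun A hA B hB ↦ by
      simpa [k] using hsep (A, B) (mem_iUnion.2 ⟨i, hA, hB⟩)
  choose κ hκ using fun i ↦ exists_isCut i (isClosed_levelSet continuous_weight (hK.isClosed i 0))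
    (isClosed_levelSet continuous_weight (hK.isClosed i 1)) (hdisj i)
  have hgfst : Continuous fun q : X × UnitCube n ↦ g q.1 := by fun_prop
  have hY : IsClosed {q | Φ q = 0 ∧ ∀ i, κ i q = 1 / 2} := by
    simp only [ofPred_and, ofPred_forall]
    exact (isClosed_eq Φ.continuous continuous_const).inter
      (isClosed_iInter fun i ↦ isClosed_eq (κ i).continuous continuous_const)
  obtain ⟨γ, hγ₀, hγ₁, hγ⟩ := exists_continuous_ne_half hY
    (isClosed_eq hgfst continuous_const) (isClosed_eq hgfst continuous_const)
    (disjoint_left.2 fun q h₀ h₁ ↦ zero_ne_one (h₀.symm.trans h₁))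
    fun A ↦ hK.disjoint_or_disjoint hρ hfg.mem_Icc hk hΦ hκ
  refine UnitCube.IsSignedPair.hasThinShrinking (Γ := fun q ↦ γ q - 1 / 2)
    (κ := fun i q ↦ κ i q - 1 / 2)
    (hΦ.isSignedPair hρ hfg (fun q hq ↦ ?_) fun q hq ↦ ?_) ⟨fun i q hq ↦ ?_, fun i q hq ↦ ?_⟩ hU
    (by fun_prop) (by fun_prop) (by fun_prop) fun q ↦ ?_
  · norm_num [hγ₀ hq]
  · norm_num [hγ₁ hq]
  · norm_num [(hκ i).face₀ q hq]
  · norm_num [(hκ i).face₁ q hq]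
  · by_contra! h
    exact hγ q ⟨h.1, fun i ↦ sub_eq_zero.1 (h.2.2 i)⟩ (sub_eq_zero.1 h.2.1)

end Splitting

/-! ### Property C and splitting families -/

section PropertyC

open Subcontinua Function

lemma IsCSpace.isMCSpace {Y : Type*} [TopologicalSpace Y] (hY : IsCSpace Y) (m : ℕ) :
    IsMCSpace m Y := by
  intro U hU hcover
  obtain ⟨V, hV, hVcover⟩ := hY (fun i ↦ range (U i))
    fun i ↦ ⟨forall_mem_range.2 (hU i), (sUnion_range _).trans (hcover i)⟩
  exact ⟨V, fun i ↦ ⟨(hV i).1, (hV i).2.1, fun v hv ↦ exists_range_iff.1 ((hV i).2.2 v hv)⟩,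
    hVcover⟩

theorem IsMCSpace.exists_isClosed_families {m : ℕ} {Y : Type*} [TopologicalSpace Y]
    [CompactSpace Y] [NormalSpace Y] (hY : IsMCSpace m Y) {U : ℕ → Fin m → Set Y}
    (hU : ∀ i j, IsOpen (U i j)) (hcover : ∀ i, ⋃ j, U i j = univ) :
    ∃ (n : ℕ) (K : Fin n → Fin m → Set Y), (∀ i j, IsClosed (K i j)) ∧ (∀ i j, K i j ⊆ U i j) ∧
      (∀ i, Pairwise (Disjoint on K i)) ∧ ∀ y, ∃ i j, y ∈ K i j := by
  obtain ⟨V, hV, hVcover⟩ := hY U hU hcover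
  choose c hc using fun i v (hv : v ∈ V i) ↦ (hV i).2.2 v hv
  let G (i : ℕ) (j : Fin m) : Set Y := ⋃₀ {v | ∃ hv : v ∈ V i, c i v hv = j}
  have hG (i j) : IsOpen (G i j) := isOpen_sUnion fun v hv ↦ (hV i).1 v hv.1
  have hGU (i j) : G i j ⊆ U i j := sUnion_subset fun v ⟨hv, hvj⟩ ↦ hvj ▸ hc i v hv
  have hGdisj (i) : Pairwise (Disjoint on G i) := by
    refine fun j l hjl ↦ disjoint_sUnion_left.2 fun v ⟨hv, hvj⟩ ↦
      disjoint_sUnion_right.2 fun w ⟨hw, hwl⟩ ↦ (hV i).2.1 hv hw ?_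
    rintro rfl
    exact hjl (hvj.symm.trans hwl)
  obtain ⟨t, ht⟩ := isCompact_univ.elim_finite_subcover (fun i ↦ ⋃₀ V i)
    (fun i ↦ isOpen_sUnion (hV i).1) hVcover.ge
  obtain ⟨n, hn⟩ := t.bddAbove
  have hGcover : ⋃ p : Fin (n + 1) × Fin m, G p.1 p.2 = univ := by
    refine eq_univ_of_forall fun y ↦ ?_
    obtain ⟨i, hi, v, hv, hy⟩ := mem_iUnion₂.1 (ht (mem_univ y))
    exact mem_iUnion.2 ⟨(⟨i, Nat.lt_succ_of_le (hn hi)⟩, c i v hv), v, ⟨hv, rfl⟩, hy⟩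
  obtain ⟨K, hKcover, hK, hKG⟩ :=
    exists_iUnion_eq_closed_subset (fun p ↦ hG _ _) (fun y ↦ toFinite _) hGcover
  refine ⟨n + 1, fun i j ↦ K (i, j), fun i j ↦ hK _, fun i j ↦ (hKG _).trans (hGU _ _),
    fun i j l hjl ↦ (hGdisj i hjl).mono (hKG (i, j)) (hKG (i, l)), fun y ↦ ?_⟩
  simpa only [mem_iUnion, Prod.exists] using hKcover.ge (mem_univ y)

variable {X ι : Type*} [TopologicalSpace X]

lemma DisjointBumps.comp {κ Y : Type*} [TopologicalSpace Y] {ρ : ι → C(X, ℝ)}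
    (hρ : DisjointBumps ρ) (g : C(Y, X)) {φ : κ → ι} (hφ : Injective φ) :
    DisjointBumps fun i ↦ (ρ (φ i)).comp g where
  mem_Icc i y := hρ.mem_Icc (φ i) (g y)
  eq_zero_or _ _ hij y := hρ.eq_zero_or (hφ.ne hij) (g y)

lemma exists_disjointBumps [NormalSpace X] [T2Space X] {s : Set X} (hs : IsOpen s)
    (hinf : s.Infinite) : ∃ (ρ : ℕ → C(X, ℝ)) (e : ℕ → X), DisjointBumps ρ ∧
      ∀ i, e i ∈ s ∧ ρ i (e i) = 1 := by
  have := hinf.to_subtype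
  obtain ⟨V, hVinf, hV, hdisj⟩ := exists_seq_infinite_isOpen_pairwise_disjoint s
  choose e he using fun i ↦ (hVinf i).nonempty
  have he' (i) : (e i : X) ∉ ((↑) '' V i : Set X)ᶜ := not_not_intro (mem_image_of_mem _ (he i))
  choose ρ hρ₀ hρ₁ hρ using fun i ↦ exists_continuous_zero_one_of_isClosed
    (hs.isOpenMap_subtype_val _ (hV i)).isClosed_compl isClosed_singleton
    (disjoint_singleton_right.2 (he' i))
  refine ⟨ρ, fun i ↦ e i, ⟨hρ, fun i j hij x ↦ ?_⟩, fun i ↦ ⟨(e i).2, hρ₁ i rfl⟩⟩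
  by_contra! h
  obtain ⟨y, hy, rfl⟩ := not_notMem.1 fun hx ↦ h.1 (hρ₀ i hx)
  obtain ⟨z, hz, hzy⟩ := not_notMem.1 fun hx ↦ h.2 (hρ₀ j hx)
  exact disjoint_left.1 (hdisj hij) hy (Subtype.coe_injective hzy ▸ hz)

lemma exists_isCoordinates [NormalSpace X] {U : Fin 3 → Set X} (hU : ∀ j, IsOpen (U j))
    (hcover : ⋃ j, U j = univ) : ∃ f g, IsCoordinates U f g := by
  have hmem (x) : x ∈ U 0 ∨ x ∈ U 1 ∨ x ∈ U 2 := by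
    simpa [Fin.exists_fin_succ] using hcover.ge (mem_univ x)
  obtain ⟨f, hf₀, hf₁, -⟩ := exists_continuous_zero_one_of_isClosed (hU 0).isClosed_compl
    ((hU 1).isClosed_compl.inter (hU 2).isClosed_compl) <| disjoint_left.2 fun x h₀ ⟨h₁, h₂⟩ ↦
      (hmem x).elim h₀ (Or.rec h₁ h₂)
  have hf : IsClosed {x | 4 * f x - 2 ≤ 3 / 2} := isClosed_le (by fun_prop) continuous_const
  obtain ⟨g, hg₀, hg₁, hg⟩ := exists_continuous_zero_one_of_isClosed
    ((hU 1).isClosed_compl.inter hf) ((hU 2).isClosed_compl.inter hf) <| by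
      refine disjoint_left.2 fun x ⟨h₁, hx⟩ ⟨h₂, _⟩ ↦ ?_
      norm_num [hf₁ ⟨h₁, h₂⟩] at hx
  refine ⟨⟨fun x ↦ 4 * f x - 2, by fun_prop⟩, g, hg, fun x hx ↦ ?_, fun x hx ↦ ?_, fun x hx ↦ ?_⟩
  · simp [hf₀ hx]
  · exact or_iff_not_imp_left.2 fun h ↦ hg₀ ⟨hx, not_lt.1 h⟩
  · exact or_iff_not_imp_left.2 fun h ↦ hg₁ ⟨hx, not_lt.1 h⟩

/-- The cover of the hyperspace by the continua which meet `{ρ > 9 / 10, f < 1 / 4}`, those which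
meet `{ρ > 9 / 10, f > -1 / 4}`, and those which avoid `{g = e}`. -/
def splitCover (f g ρ : C(X, ℝ)) (e : ℝ) : Fin 3 → Set (Subcontinua X) :=
  ![{B | ((B : Set X) ∩ {x | 9 / 10 < ρ x ∧ f x < 1 / 4}).Nonempty},
    {B | ((B : Set X) ∩ {x | 9 / 10 < ρ x ∧ -(1 / 4) < f x}).Nonempty},
    {B | (B : Set X) ⊆ {x | g x ≠ e}}]

lemma isOpen_splitCover (f g ρ : C(X, ℝ)) (e : ℝ) : ∀ j, IsOpen (splitCover f g ρ e j)
  | 0 => isOpen_setOf_inter_nonempty <| (isOpen_lt continuous_const ρ.continuous).inter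
      (isOpen_lt f.continuous continuous_const)
  | 1 => isOpen_setOf_inter_nonempty <| (isOpen_lt continuous_const ρ.continuous).inter
      (isOpen_lt continuous_const f.continuous)
  | 2 => isOpen_setOf_subset (isOpen_ne_fun g.continuous continuous_const)

lemma iUnion_splitCover {f g ρ : C(X, ℝ)} {e : ℝ} (hρ : ∀ x, g x = e → ρ x = 1) :
    ⋃ j, splitCover f g ρ e j = univ := by
  refine eq_univ_of_forall fun B ↦ mem_iUnion.2 ?_
  by_cases hB : (B : Set X) ⊆ {x | g x ≠ e}
  · exact ⟨2, hB⟩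
  · obtain ⟨x, hxB, hx⟩ := not_subset.1 hB
    have hρx : 9 / 10 < ρ x := by norm_num [hρ x (not_not.1 hx)]
    rcases lt_or_ge (f x) (1 / 4) with hfx | hfx
    · exact ⟨0, x, hxB, hρx, hfx⟩
    · exact ⟨1, x, hxB, hρx, by linarith⟩

theorem exists_splitFamily [CompactSpace X] [T2Space X] (hX : IsMCSpace 3 (Subcontinua X))
    (f g : C(X, ℝ)) : ∃ (n : ℕ) (ρ : Fin n → C(X, ℝ)) (K : Fin n → Fin 3 → Set (Subcontinua X)),
      DisjointBumps ρ ∧ SplitFamily f g ρ K := by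
  obtain ⟨ρ, e, hρ, he⟩ := exists_disjointBumps (isOpen_Ioo (a := (1 / 5 : ℝ)) (b := 4 / 5))
    (Ioo_infinite (by norm_num))
  obtain ⟨n, K, hK, hKU, hdisj, hcover⟩ := hX.exists_isClosed_families
    (U := fun i ↦ splitCover f g ((ρ i).comp g) (e i)) (fun i ↦ isOpen_splitCover _ _ _ _)
    fun i ↦ iUnion_splitCover fun x hx ↦ by rw [ContinuousMap.comp_apply, hx, (he i).2]
  refine ⟨n, _, K, hρ.comp g Fin.val_injective, hK, fun i ↦ hdisj i zero_ne_one, hcover,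
    fun i B hB ↦ hKU i 0 hB, fun i B hB ↦ hKU i 1 hB, fun i B hB hg ↦ ?_⟩
  obtain ⟨x, hxB, hx⟩ := hg (Ioo_subset_Icc_self (he i).1)
  exact hKU i 2 hB hxB hx

end PropertyC

theorem hyperspace_not_cSpace_of_two_le_covDim_general (X : Type u) [TopologicalSpace X]
    [CompactSpace X] [T2Space X] (h : 2 ≤ covDim X) : ¬IsMCSpace 3 (Subcontinua X) := by
  intro hX
  obtain ⟨U, hU, hcover, hthin⟩ := exists_not_hasThinShrinking_of_lt_covDim (n := 1)
    ((Nat.cast_lt.2 one_lt_two).trans_le h)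
  obtain ⟨f, g, hfg⟩ := exists_isCoordinates hU hcover
  obtain ⟨n, ρ, K, hρ, hK⟩ := exists_splitFamily hX f g
  exact hthin (hK.hasThinShrinking hρ hfg hU)

/-- If `X` is a Hausdorff continuum of covering dimension at least `2`, then
the hyperspace `C(X)` of subcontinua of `X` is not a C-space. -/
theorem hyperspace_not_cSpace_of_two_le_covDim (X : Type u) [TopologicalSpace X]
    [CompactSpace X] [T2Space X] [ConnectedSpace X] (h : 2 ≤ covDim X) :
    ¬ IsCSpace (Subcontinua X) :=
  fun hX ↦ hyperspace_not_cSpace_of_two_le_covDim_general X h (hX.isMCSpace 3)
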